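/- arXiv:1407.7422 — 2 statements merged into one kernel-verified Lean document; each statement's English description precedes it below -/
import Mathlib

section
/- Let 1 < p < q < p*. Then there exists an open bounded convex set K ⊂ ℝ^N such that for every open bounded convex set Ω ⊂ ℝ^N one has μ_{p,q}(Ω) · (diam(Ω))^{p + Np/q − N} ≤ μ_{p,q}(K) · (diam(K))^{p + Np/q − N}; equivalently, for every c > 0 the shape optimization problem sup{μ_{p,q}(Ω) : Ω ⊂ ℝ^N open bounded convex, diam(Ω) ≥ c} admits a maximizer. -/
open MeasureTheory Metric Set Real

noncomputable section

/-- The Rayleigh quotient `(∫_Ω |∇v|^p) / (∫_Ω |v|^q)^(p/q)`, where the gradient is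
understood as the (a.e. defined) Fréchet derivative. -/
def rayleighQuot {N : ℕ} (p q : ℝ) (Ω : Set (EuclideanSpace ℝ (Fin N)))
    (v : EuclideanSpace ℝ (Fin N) → ℝ) : ℝ :=
  (∫ x in Ω, ‖fderiv ℝ v x‖ ^ p) / (∫ x in Ω, |v x| ^ q) ^ (p / q)

/-- The first (generalized) Dirichlet eigenvalue `λ_{p,q}(Ω)`: infimum of the Rayleigh
quotient over nontrivial smooth functions compactly supported in `Ω`. -/
def lambdaPQ {N : ℕ} (p q : ℝ) (Ω : Set (EuclideanSpace ℝ (Fin N))) : ℝ :=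
  sInf { R : ℝ | ∃ v : EuclideanSpace ℝ (Fin N) → ℝ,
    ContDiff ℝ (⊤ : ℕ∞) v ∧ HasCompactSupport v ∧ tsupport v ⊆ Ω ∧
    (∃ x ∈ Ω, v x ≠ 0) ∧ R = rayleighQuot p q Ω v }

/-- The first nontrivial (generalized) Neumann eigenvalue `μ_{p,q}(Ω)`: infimum of the
Rayleigh quotient over nontrivial Lipschitz functions on the closure of `Ω` satisfying
the constraint `∫_Ω |v|^(q-2) v = 0`. -/
def muPQ {N : ℕ} (p q : ℝ) (Ω : Set (EuclideanSpace ℝ (Fin N))) : ℝ :=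
  sInf { R : ℝ | ∃ v : EuclideanSpace ℝ (Fin N) → ℝ, ∃ K : NNReal,
    LipschitzOnWith K v (closure Ω) ∧ (∃ x ∈ Ω, v x ≠ 0) ∧
    (∫ x in Ω, |v x| ^ (q - 2) * v x) = 0 ∧ R = rayleighQuot p q Ω v }

/-- `q` is below the critical Sobolev exponent `p* = Np/(N-p)` (with `p* = ∞` if `p ≥ N`). -/
def ltCritical (N : ℕ) (p q : ℝ) : Prop := p < N → q < N * p / (N - p)

end


open Filter Topology

lemma aux_phi_cont {q : ℝ} (hq : 1 < q) : Continuous fun t : ℝ => |t| ^ (q - 2) * t := by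
  rw [continuous_iff_continuousAt]
  intro t
  by_cases ht : t = 0
  · subst ht
    have h0 : Tendsto (fun t : ℝ => |t| ^ (q - 1)) (𝓝 0) (𝓝 0) := by
      have : Continuous fun t : ℝ => |t| ^ (q - 1) :=
        continuous_abs.rpow_const (fun x => Or.inr (by linarith))
      have h := this.tendsto 0
      simpa [Real.zero_rpow (show q - 1 ≠ 0 by linarith)] using h
    unfold ContinuousAt
    simp only [mul_zero]
    refine squeeze_zero_norm (fun t => ?_) h0
    by_cases ht : t = 0
    · subst ht; simp [Real.zero_rpow (show q - 1 ≠ 0 by linarith)]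
    · rw [norm_mul, Real.norm_eq_abs, Real.norm_eq_abs, abs_of_nonneg (by positivity),
        show q - 1 = (q - 2) + 1 by ring, Real.rpow_add_one (by positivity)]
  · exact (continuous_abs.continuousAt.rpow_const (Or.inl (by simpa using ht))).mul continuousAt_id

lemma aux_young {q : ℝ} (hq : 1 < q) (a c : ℝ) :
    |a| ^ q ≤ |a - c| ^ q + q * c * (|a| ^ (q - 2) * a) := by
  by_cases ha : a = 0
  · subst ha
    simp [Real.zero_rpow (show q ≠ 0 by linarith)]
    positivity
  have hapos : 0 < |a| := abs_pos.2 ha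
  have h := Real.young_inequality_of_nonneg (abs_nonneg (a - c))
    (Real.rpow_nonneg (abs_nonneg a) (q - 1)) (Real.HolderConjugate.conjExponent hq)
  have h1 : (|a| ^ (q - 1)) ^ q.conjExponent = |a| ^ q := by
    rw [← Real.rpow_mul hapos.le, Real.conjExponent]
    congr 1
    field_simp [show q - 1 ≠ 0 by linarith]
  rw [h1] at h
  have h2 : |a| ^ (q - 1) = |a| ^ (q - 2) * |a| := by
    rw [← Real.rpow_add_one hapos.ne']; ring_nf
  have h3 : |a| ^ q = |a| ^ (q - 2) * a * a := by
    rw [mul_assoc, ← abs_mul_abs_self a, ← mul_assoc, ← h2, ← Real.rpow_add_one hapos.ne']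
    ring_nf
  have h4 : |a| ^ (q - 2) * a * (a - c) ≤ |a - c| * |a| ^ (q - 1) := by
    rw [h2]
    have : a * (a - c) ≤ |a - c| * |a| := by
      rw [← abs_mul, mul_comm]; exact le_abs_self _
    nlinarith [Real.rpow_nonneg (abs_nonneg a) (q - 2)]
  have h5 : |a| ^ q / q.conjExponent = |a| ^ q - |a| ^ q / q := by
    rw [Real.conjExponent]; field_simp
  rw [h5] at h
  have h6 : |a| ^ (q - 2) * a * (a - c) ≤ |a - c| ^ q / q + (|a| ^ q - |a| ^ q / q) :=
    h4.trans h
  have h7 := mul_le_mul_of_nonneg_left h6 (show 0 ≤ q by linarith)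
  have h8 : q * (|a - c| ^ q / q + (|a| ^ q - |a| ^ q / q)) =
    |a - c| ^ q + (q - 1) * |a| ^ q := by field_simp
  rw [h8] at h7
  nlinarith

abbrev EE (N : ℕ) := EuclideanSpace ℝ (Fin N)

lemma aux_intOn {N : ℕ} {Ω : Set (EE N)} (hb : Bornology.IsBounded Ω) {f : EE N → ℝ}
    (hf : Continuous f) : IntegrableOn f Ω := by
  have : IsCompact (closure Ω) := hb.isCompact_closure
  exact (hf.continuousOn.integrableOn_compact this).mono_set subset_closure

lemma aux_vol_lt {N : ℕ} {Ω : Set (EE N)} (hb : Bornology.IsBounded Ω) : volume Ω < ⊤ :=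
  hb.measure_lt_top

lemma aux_exists_c {N : ℕ} {q : ℝ} (hq : 1 < q) {Ω : Set (EE N)} (ho : IsOpen Ω)
    (hb : Bornology.IsBounded Ω) {v : EE N → ℝ} (hv : Continuous v) {B : ℝ} (hB0 : 0 ≤ B)
    (hB : ∀ x ∈ Ω, |v x| ≤ B) :
    ∃ c, |c| ≤ B ∧ ∫ x in Ω, |v x - c| ^ (q - 2) * (v x - c) = 0 := by
  have hφ := aux_phi_cont hq
  have hcont : ContinuousOn (fun c : ℝ => ∫ x in Ω, |v x - c| ^ (q - 2) * (v x - c)) (Icc (-B) B) := by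
    obtain ⟨D, hD⟩ := (isCompact_Icc (a := -(2 * B)) (b := 2 * B)).exists_bound_of_continuousOn
      hφ.continuousOn
    apply continuousOn_of_dominated (bound := fun _ => D)
    · intro c _
      exact (hφ.comp (hv.sub continuous_const)).aestronglyMeasurable
    · intro c hc
      filter_upwards [ae_restrict_mem ho.measurableSet] with x hx
      apply hD
      have := abs_le.1 (hB x hx)
      constructor <;> linarith [hc.1, hc.2]
    · exact aux_intOn hb continuous_const
    · exact Eventually.of_forall fun x => (hφ.comp (continuous_const.sub continuous_id)).continuousOn
  have h1 : ∫ x in Ω, |v x - B| ^ (q - 2) * (v x - B) ≤ 0 := by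
    apply setIntegral_nonpos ho.measurableSet
    intro x hx
    have := abs_le.1 (hB x hx)
    exact mul_nonpos_of_nonneg_of_nonpos (by positivity) (by linarith)
  have h2 : 0 ≤ ∫ x in Ω, |v x - (-B)| ^ (q - 2) * (v x - (-B)) := by
    apply setIntegral_nonneg ho.measurableSet
    intro x hx
    have := abs_le.1 (hB x hx)
    exact mul_nonneg (by positivity) (by linarith)
  obtain ⟨c, hc, hc0⟩ := intermediate_value_Icc' (by linarith : -B ≤ B) hcont ⟨h1, h2⟩
  exact ⟨c, abs_le.2 hc, hc0⟩

lemma aux_R_nonneg {N : ℕ} (p q : ℝ) (Ω : Set (EE N)) (v : EE N → ℝ) : 0 ≤ rayleighQuot p q Ω v := by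
  unfold rayleighQuot
  apply div_nonneg
  · exact integral_nonneg fun x => by positivity
  · exact Real.rpow_nonneg (integral_nonneg fun x => by positivity) _

lemma aux_mu_nonneg {N : ℕ} (p q : ℝ) (Ω : Set (EE N)) : 0 ≤ muPQ p q Ω := by
  apply Real.sInf_nonneg
  rintro R ⟨v, K, -, -, -, rfl⟩
  exact aux_R_nonneg _ _ _ _

def testSet {N : ℕ} (p q : ℝ) (Ω : Set (EE N)) : Set ℝ :=
  { R : ℝ | ∃ v : EuclideanSpace ℝ (Fin N) → ℝ, ∃ K : NNReal,
    LipschitzOnWith K v (closure Ω) ∧ (∃ x ∈ Ω, v x ≠ 0) ∧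
    (∫ x in Ω, |v x| ^ (q - 2) * v x) = 0 ∧ R = rayleighQuot p q Ω v }

lemma aux_bdd {N : ℕ} (p q : ℝ) (Ω : Set (EE N)) : BddBelow (testSet p q Ω) := by
  refine ⟨0, ?_⟩
  rintro R ⟨v, K, -, -, -, rfl⟩
  exact aux_R_nonneg _ _ _ _

lemma aux_mu_le {N : ℕ} {p q : ℝ} (hp : 1 < p) (hq : 1 < q) {Ω : Set (EE N)} (ho : IsOpen Ω)
    (hb : Bornology.IsBounded Ω) {v : EE N → ℝ} {L : NNReal} (hv : LipschitzWith L v)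
    {B : ℝ} (hB0 : 0 ≤ B) (hB : ∀ x ∈ Ω, |v x| ≤ B) {A : ℝ} (hA : 0 < A)
    (hAc : ∀ c, |c| ≤ B → A ≤ ∫ x in Ω, |v x - c| ^ q) :
    (testSet p q Ω).Nonempty ∧
    muPQ p q Ω ≤ (∫ x in Ω, ‖fderiv ℝ v x‖ ^ p) / A ^ (p / q) := by
  obtain ⟨c, hc, hc0⟩ := aux_exists_c hq ho hb hv.continuous hB0 hB
  have hmem : rayleighQuot p q Ω (fun x => v x - c) ∈ testSet p q Ω := by
    refine ⟨fun x => v x - c, L, ?_, ?_, hc0, rfl⟩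
    · intro x _ y _
      simpa [edist_sub_right] using hv x y
    · by_contra! h
      have h1 := hAc c hc
      rw [setIntegral_congr_fun (g := fun _ => 0) ho.measurableSet] at h1
      · simp at h1; linarith
      · intro x hx
        simp [h x hx, Real.zero_rpow (show q ≠ 0 by linarith)]
  refine ⟨⟨_, hmem⟩, (csInf_le (aux_bdd p q Ω) hmem).trans ?_⟩
  unfold rayleighQuot
  simp only [fderiv_sub_const]
  have := hAc c hc
  gcongr

lemma aux_grad_int {N : ℕ} {p : ℝ} (hp : 1 < p) {S : Set (EE N)} 
    (hS : volume S < ⊤) {v : EE N → ℝ} {L : NNReal} (hv : LipschitzWith L v) :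
    IntegrableOn (fun x => ‖fderiv ℝ v x‖ ^ p) S := by
  apply Measure.integrableOn_of_bounded (M := (L : ℝ) ^ p) hS.ne
  · exact ((measurable_fderiv ℝ v).norm.pow_const p).aestronglyMeasurable
  · refine Eventually.of_forall fun x => ?_
    rw [Real.norm_of_nonneg (by positivity)]
    exact Real.rpow_le_rpow (norm_nonneg _) (norm_fderiv_le_of_lipschitz ℝ hv) (by linarith)

lemma aux_grad_le {N : ℕ} {p : ℝ} (hp : 1 < p) {S : Set (EE N)} 
    (hS : volume S < ⊤) {v : EE N → ℝ} {L : NNReal} (hv : LipschitzWith L v) :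
    ∫ x in S, ‖fderiv ℝ v x‖ ^ p ≤ (L : ℝ) ^ p * volume.real S := by
  have := norm_setIntegral_le_of_norm_le_const (μ := volume) (s := S)
    (f := fun x => ‖fderiv ℝ v x‖ ^ p) (C := (L : ℝ) ^ p) hS (fun x _ => by
      rw [Real.norm_of_nonneg (by positivity)]
      exact Real.rpow_le_rpow (norm_nonneg _) (norm_fderiv_le_of_lipschitz ℝ hv) (by linarith))
  exact (le_abs_self _).trans this

lemma aux_homo {N : ℕ} {Ω : Set (EE N)} (hc : Convex ℝ Ω) (hd : diam Ω = 1)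
    (hb : Bornology.IsBounded Ω) {x : EE N} (hx : x ∈ Ω) :
    ∃ S ⊆ Ω, (∀ z ∈ S, dist z x ≤ 1 / 4) ∧ volume.real S = (1 / 4) ^ N * volume.real Ω := by
  refine ⟨AffineMap.homothety x (1 / 4 : ℝ) '' Ω, ?_, ?_, ?_⟩
  · rintro _ ⟨z, hz, rfl⟩
    rw [AffineMap.homothety_eq_lineMap]
    exact hc.lineMap_mem hx hz ⟨by norm_num, by norm_num⟩
  · rintro _ ⟨z, hz, rfl⟩
    rw [AffineMap.homothety_eq_lineMap, dist_lineMap_left]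
    have : dist x z ≤ 1 := hd ▸ dist_le_diam_of_mem hb hx hz
    rw [Real.norm_of_nonneg (by norm_num)]
    linarith
  · rw [measureReal_def, Measure.addHaar_image_homothety, ENNReal.toReal_mul, measureReal_def]
    simp

lemma aux_lower {N : ℕ} {q : ℝ} (hq : 1 < q) {Ω S : Set (EE N)} (ho : IsOpen Ω)
    (hb : Bornology.IsBounded Ω) (hS : S ⊆ Ω) {v : EE N → ℝ} (hv : Continuous v) {c δ : ℝ}
    (hδ : 0 ≤ δ) (h : ∀ z ∈ S, δ ≤ |v z - c|) :
    δ ^ q * volume.real S ≤ ∫ x in Ω, |v x - c| ^ q := by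
  have hcont : Continuous fun x => |v x - c| ^ q :=
    ((hv.sub continuous_const).abs).rpow_const (fun x => Or.inr (by linarith))
  have hfin : volume (Ω ∩ {x | δ ≤ |v x - c|}) < ⊤ :=
    (measure_mono inter_subset_left).trans_lt (aux_vol_lt hb)
  have hm : MeasurableSet (Ω ∩ {x | δ ≤ |v x - c|}) :=
    ho.measurableSet.inter (isClosed_le continuous_const
      ((hv.sub continuous_const).abs)).measurableSet
  calc δ ^ q * volume.real S ≤ δ ^ q * volume.real (Ω ∩ {x | δ ≤ |v x - c|}) := by
        gcongr
        · exact hfin.ne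
        · exact fun z hz => ⟨hS hz, h z hz⟩
    _ = ∫ x in Ω ∩ {x | δ ≤ |v x - c|}, δ ^ q := by simp [mul_comm]
    _ ≤ ∫ x in Ω ∩ {x | δ ≤ |v x - c|}, |v x - c| ^ q := by
        apply setIntegral_mono_on _ ((aux_intOn hb hcont).mono_set inter_subset_left) hm
        · intro x hx
          exact Real.rpow_le_rpow hδ hx.2 (by linarith)
        · exact integrableOn_const hfin.ne
    _ ≤ ∫ x in Ω, |v x - c| ^ q := by
        apply setIntegral_mono_set (aux_intOn hb hcont)
        · exact Eventually.of_forall fun x => by positivity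
        · exact (inter_subset_left).eventuallyLE

lemma aux_upper {N : ℕ} {p q : ℝ} (hp : 1 < p) (hq : 1 < q) {Ω : Set (EE N)} (ho : IsOpen Ω)
    (hb : Bornology.IsBounded Ω) (hc : Convex ℝ Ω) (hne : Ω.Nonempty) (hd : diam Ω = 1) :
    (testSet p q Ω).Nonempty ∧
    muPQ p q Ω ≤ (((1 / 8 : ℝ) ^ q * (1 / 4) ^ N) ^ (p / q))⁻¹ * volume.real Ω ^ (1 - p / q) := by
  have hV : 0 < volume.real Ω := by
    rw [measureReal_def]
    exact ENNReal.toReal_pos (ho.measure_pos volume hne).ne' (aux_vol_lt hb).ne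
  obtain ⟨x, hx, y, hy, hxy⟩ : ∃ x ∈ Ω, ∃ y ∈ Ω, 7 / 8 ≤ dist x y := by
    by_contra! h
    have := diam_le_of_forall_dist_le (s := Ω) (C := 7 / 8) (by norm_num)
      (fun x hx y hy => (h x hx y hy).le)
    linarith
  obtain ⟨S, hSΩ, hS, hSv⟩ := aux_homo hc hd hb hx
  obtain ⟨T, hTΩ, hT, hTv⟩ := aux_homo hc hd hb hy
  have hlip : LipschitzWith 1 (fun z : EE N => dist z x) := LipschitzWith.dist_left x
  have key := aux_mu_le (p := p) (q := q) hp hq ho hb hlip (B := 1) (by norm_num)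
    (fun z hz => by
      rw [abs_of_nonneg dist_nonneg]
      exact hd ▸ dist_le_diam_of_mem hb hz hx)
    (A := (1 / 8 : ℝ) ^ q * ((1 / 4) ^ N * volume.real Ω)) (by positivity)
    (fun c _ => by
      by_cases hcc : 3 / 8 ≤ c
      · rw [← hSv]
        apply aux_lower hq ho hb hSΩ hlip.continuous (by norm_num)
        intro z hz
        rw [abs_sub_comm]
        exact le_trans (by linarith [hS z hz]) (le_abs_self _)
      · rw [← hTv]
        apply aux_lower hq ho hb hTΩ hlip.continuous (by norm_num)
        intro z hz
        have h1 := hT z hz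
        have h2 := dist_triangle_left x y z
        exact le_trans (by linarith) (le_abs_self _))
  refine ⟨key.1, key.2.trans ?_⟩
  have h1 := aux_grad_le hp (aux_vol_lt hb) hlip
  simp only [NNReal.coe_one, Real.one_rpow, one_mul] at h1
  rw [← mul_assoc, Real.mul_rpow (by positivity) hV.le, Real.rpow_sub hV, Real.rpow_one,
    inv_mul_eq_div, div_div, mul_comm (volume.real Ω ^ (p / q))]
  gcongr

lemma aux_cv {N : ℕ} {d : ℝ} (hd : 0 < d) (x0 : EE N) {Ω : Set (EE N)} (ho : IsOpen Ω)
    (f : EE N → ℝ) :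
    ∫ x in (fun x => d⁻¹ • (x - x0)) ⁻¹' Ω, f (d⁻¹ • (x - x0)) = d ^ N * ∫ x in Ω, f x := by
  have hm : MeasurableSet ((fun x : EE N => d⁻¹ • (x - x0)) ⁻¹' Ω) :=
    (ho.preimage (by fun_prop)).measurableSet
  rw [← integral_indicator hm, ← integral_indicator ho.measurableSet]
  have h1 : ((fun x : EE N => d⁻¹ • (x - x0)) ⁻¹' Ω).indicator (fun x => f (d⁻¹ • (x - x0)))
      = fun x => (fun y => Ω.indicator f (d⁻¹ • y)) (x - x0) := by
    ext x
    rfl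
  rw [h1, integral_sub_right_eq_self (fun y => Ω.indicator f (d⁻¹ • y)) x0,
    Measure.integral_comp_inv_smul_of_nonneg _ _ hd.le]
  simp

lemma aux_scale {N : ℕ} {p q : ℝ} {d : ℝ} (hd : 0 < d) (x0 : EE N)
    {Ω : Set (EE N)} (ho : IsOpen Ω) (hne : (testSet p q Ω).Nonempty) :
    muPQ p q ((fun x => d⁻¹ • (x - x0)) ⁻¹' Ω) * d ^ (p + N * p / q - N) ≤ muPQ p q Ω := by
  apply le_csInf hne
  rintro R ⟨v, K, hK, ⟨y, hy, hy0⟩, hint, rfl⟩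
  set T : EE N → EE N := fun x => d⁻¹ • (x - x0) with hT
  have hTc : Continuous T := by fun_prop
  have hfd : ∀ x, ‖fderiv ℝ (fun x => v (T x)) x‖ = d⁻¹ * ‖fderiv ℝ v (T x)‖ := by
    intro x
    have h1 : fderiv ℝ (fun x => v (T x)) x = fderiv ℝ (fun y => v (d⁻¹ • y)) (x - x0) :=
      fderiv_comp_sub (𝕜 := ℝ) (f := fun y => v (d⁻¹ • y)) (x := x) x0
    rw [h1, fderiv_comp_smul, norm_smul, Real.norm_of_nonneg (by positivity)]
  have hnum : ∫ x in T ⁻¹' Ω, ‖fderiv ℝ (fun x => v (T x)) x‖ ^ p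
      = d ^ (-p) * d ^ N * ∫ x in Ω, ‖fderiv ℝ v x‖ ^ p := by
    simp_rw [hfd]
    rw [aux_cv hd x0 ho (fun z => (d⁻¹ * ‖fderiv ℝ v z‖) ^ p)]
    simp_rw [Real.mul_rpow (inv_nonneg.2 hd.le) (norm_nonneg _)]
    rw [integral_const_mul, Real.inv_rpow hd.le, Real.rpow_neg hd.le]
    ring
  have hden : ∫ x in T ⁻¹' Ω, |v (T x)| ^ q = d ^ N * ∫ x in Ω, |v x| ^ q :=
    aux_cv hd x0 ho (fun z => |v z| ^ q)
  have hR : rayleighQuot p q (T ⁻¹' Ω) (fun x => v (T x)) * d ^ (p + N * p / q - N)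
      = rayleighQuot p q Ω v := by
    unfold rayleighQuot
    have h0 : 0 ≤ ∫ x in Ω, |v x| ^ q := integral_nonneg fun x => by positivity
    rw [hnum, hden, Real.mul_rpow (by positivity) h0, ← Real.rpow_natCast, ← Real.rpow_mul hd.le,
      ← Real.rpow_add hd]
    have : d ^ (-p + (N : ℝ)) * d ^ (p + N * p / q - N) = d ^ (N * (p / q)) := by
      rw [← Real.rpow_add hd]; ring_nf
    have hpos : 0 < d ^ (N * (p / q)) := by positivity
    rw [div_mul_eq_mul_div, mul_right_comm, this, mul_div_mul_left _ _ hpos.ne']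
  rw [← hR]
  gcongr
  apply csInf_le (aux_bdd p q _)
  refine ⟨fun x => v (T x), K * ‖d⁻¹‖₊, ?_, ?_, ?_, rfl⟩
  · have hTl : LipschitzWith ‖d⁻¹‖₊ T := by
      apply LipschitzWith.of_dist_le_mul
      intro a b
      simp only [hT, dist_smul₀, coe_nnnorm, dist_sub_right, le_refl]
    exact hK.comp hTl.lipschitzOnWith ((mapsTo_preimage T Ω).closure hTc)
  · refine ⟨x0 + d • y, ?_, ?_⟩ <;> simp [hT, smul_smul, hd.ne', hy, hy0]
  · rw [aux_cv hd x0 ho (fun z => |v z| ^ (q - 2) * v z), hint, mul_zero]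

lemma aux_sep {N : ℕ} {Ω C : Set (EE N)} (hc : Convex ℝ Ω) (ho : IsOpen Ω) 
    {x : EE N} {r ε : ℝ} (hr : 0 < r) (hε : ε < r) (hx : closedBall x r ⊆ C)
    (hH : ∀ z ∈ C, ∃ a ∈ closure Ω, dist z a < ε) : x ∈ Ω := by
  by_contra hxn
  obtain ⟨f, hf⟩ := geometric_hahn_banach_open_point hc ho hxn
  have hf' : ∀ a ∈ closure Ω, f a ≤ f x := by
    intro a ha
    exact closure_minimal (t := {a | f a ≤ f x}) (fun b hb => (hf b hb).le)
      (isClosed_le f.continuous continuous_const) ha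
  set w := (InnerProductSpace.toDual ℝ (EE N)).symm f with hw
  have hfw : ∀ z, f z = inner ℝ w z := fun z => by
    rw [hw, InnerProductSpace.toDual_symm_apply]
  have hw0 : w ≠ 0 := by
    intro h0
    obtain ⟨a, ha, -⟩ := hH x (hx (mem_closedBall_self hr.le))
    obtain ⟨b, hb⟩ := closure_nonempty_iff.1 ⟨a, ha⟩
    have := hf b hb
    simp [hfw, h0] at this
  have hwn : 0 < ‖w‖ := norm_pos_iff.2 hw0
  obtain ⟨a, ha, hda⟩ := hH (x + (r / ‖w‖) • w) (hx (by
    simp [norm_smul, abs_of_pos hr, hwn.ne']))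
  have h1 := hf' a ha
  have h2 : f (x + (r / ‖w‖) • w) = f x + r * ‖w‖ := by
    rw [map_add, map_smul, hfw w, real_inner_self_eq_norm_sq, smul_eq_mul]
    field_simp
  have h3 : f (x + (r / ‖w‖) • w - a) ≤ ‖w‖ * ‖x + (r / ‖w‖) • w - a‖ := by
    rw [hfw]; exact real_inner_le_norm _ _
  rw [map_sub, h2] at h3
  rw [dist_eq_norm] at hda
  have h4 : ‖w‖ * ‖x + (r / ‖w‖) • w - a‖ < ‖w‖ * r :=
    mul_lt_mul_of_pos_left (hda.trans hε) hwn
  linarith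

/-- Compactness: from normalized convex open sets extract a limit. -/
lemma aux_blaschke {N : ℕ} (Ω : ℕ → Set (EE N)) (ho : ∀ n, IsOpen (Ω n)) 
    (hc : ∀ n, Convex ℝ (Ω n)) (h0 : ∀ n, (0 : EE N) ∈ Ω n)
    (hb : ∀ n, Bornology.IsBounded (Ω n)) (hd : ∀ n, diam (Ω n) = 1) :
    ∃ C : Set (EE N), ∃ φ : ℕ → ℕ, StrictMono φ ∧ IsCompact C ∧ Convex ℝ C ∧ diam C = 1 ∧
      ∀ᵐ x, ∀ᶠ n in atTop, (x ∈ Ω (φ n) ↔ x ∈ interior C) := by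
  let S : ℕ → TopologicalSpace.NonemptyCompacts (EE N) := fun n =>
    ⟨⟨closure (Ω n), (hb n).isCompact_closure⟩, ⟨0, subset_closure (h0 n)⟩⟩
  have hS : ∀ n, S n ∈ {L : TopologicalSpace.NonemptyCompacts (EE N) | ↑L ⊆ closedBall (0 : EE N) 1} := by
    intro n
    apply closure_minimal _ isClosed_closedBall
    intro x hx
    exact mem_closedBall.2 (hd n ▸ dist_le_diam_of_mem (hb n) hx (h0 n))
  obtain ⟨L, hL, φ, hφ, hlim⟩ :=
    (TopologicalSpace.NonemptyCompacts.isCompact_subsets_of_isCompact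
      (isCompact_closedBall (0 : EE N) 1)).tendsto_subseq hS
  have hdist : ∀ ε > 0, ∀ᶠ n in atTop, hausdorffDist (closure (Ω (φ n))) (L : Set (EE N)) < ε := by
    intro ε hε
    exact (Metric.tendsto_nhds.1 hlim ε hε)
  have hfin : ∀ n, hausdorffEDist (closure (Ω (φ n))) (L : Set (EE N)) ≠ ⊤ := fun n =>
    hausdorffEDist_ne_top_of_nonempty_of_bounded (S (φ n)).nonempty L.nonempty
      (S (φ n)).isCompact.isBounded L.isCompact.isBounded
  have hLc : IsClosed (L : Set (EE N)) := L.isCompact.isClosed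
  have hconv : Convex ℝ (L : Set (EE N)) := by
    intro x hx y hy a b ha hb hab
    rw [← hLc.closure_eq, Metric.mem_closure_iff]
    intro ε hε
    obtain ⟨n, hn⟩ := (hdist (ε / 2) (by positivity)).exists
    obtain ⟨x', hx', hxx⟩ := exists_dist_lt_of_hausdorffDist_lt' hx hn (hfin n)
    obtain ⟨y', hy', hyy⟩ := exists_dist_lt_of_hausdorffDist_lt' hy hn (hfin n)
    obtain ⟨z, hz, hzz⟩ := exists_dist_lt_of_hausdorffDist_lt
      ((hc (φ n)).closure hx' hy' ha hb hab) hn (hfin n)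
    refine ⟨z, hz, ?_⟩
    have h1 : dist (a • x + b • y) (a • x' + b • y') ≤ a * dist x x' + b * dist y y' := by
      refine (dist_add_add_le _ _ _ _).trans ?_
      rw [dist_smul₀, dist_smul₀, Real.norm_of_nonneg ha, Real.norm_of_nonneg hb]
    have h2 : a * dist x x' + b * dist y y' ≤ ε / 2 := by
      rw [dist_comm x, dist_comm y]
      nlinarith
    linarith [dist_triangle (a • x + b • y) (a • x' + b • y') z]
  refine ⟨L, φ, hφ, L.isCompact, hconv, ?_, ?_⟩
  · apply le_antisymm
    · apply le_of_forall_pos_le_add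
      intro ε hε
      obtain ⟨n, hn⟩ := (hdist (ε / 2) (by linarith)).exists
      apply diam_le_of_forall_dist_le (by linarith)
      intro x hx y hy
      obtain ⟨x', hx', hxx⟩ := exists_dist_lt_of_hausdorffDist_lt' hx hn (hfin n)
      obtain ⟨y', hy', hyy⟩ := exists_dist_lt_of_hausdorffDist_lt' hy hn (hfin n)
      have h1 := dist_le_diam_of_mem (hb (φ n)).closure hx' hy'
      rw [diam_closure, hd] at h1
      have h2 := dist_triangle4 x x' y' y
      rw [dist_comm x x'] at h2
      linarith
    by_contra! hlt
    set η := 1 - diam (L : Set (EE N)) with hη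
    obtain ⟨n, hn⟩ := (hdist (η / 4) (by linarith)).exists
    have : diam (Ω (φ n)) ≤ 1 - η / 2 := by
      apply diam_le_of_forall_dist_le
      · have := diam_nonneg (s := (L : Set (EE N))); linarith
      intro x hx y hy
      obtain ⟨x', hx', hxx⟩ := exists_dist_lt_of_hausdorffDist_lt (subset_closure hx) hn (hfin n)
      obtain ⟨y', hy', hyy⟩ := exists_dist_lt_of_hausdorffDist_lt (subset_closure hy) hn (hfin n)
      have h1 := dist_le_diam_of_mem L.isCompact.isBounded hx' hy'
      have h2 := dist_triangle4 x x' y' y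
      rw [dist_comm y' y] at h2
      linarith
    rw [hd] at this
    linarith
  · have hfr : volume (frontier (L : Set (EE N))) = 0 := hconv.addHaar_frontier volume
    filter_upwards [measure_eq_zero_iff_ae_notMem.1 hfr] with x hx
    by_cases hxi : x ∈ interior (L : Set (EE N))
    · obtain ⟨r, hr, hrb⟩ := Metric.nhds_basis_closedBall.mem_iff.1 (mem_interior_iff_mem_nhds.1 hxi)
      filter_upwards [hdist (r / 2) (by positivity)] with n hn
      refine ⟨fun _ => hxi, fun _ => ?_⟩
      apply aux_sep (hc (φ n)) (ho (φ n)) hr (by linarith : r / 2 < r) hrb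
      intro z hz
      obtain ⟨a, ha, hda⟩ := exists_dist_lt_of_hausdorffDist_lt' hz hn (hfin n)
      exact ⟨a, ha, by rwa [dist_comm]⟩
    · have hxL : x ∉ (L : Set (EE N)) := by
        intro h
        exact hx ⟨subset_closure h, hxi⟩
      obtain ⟨r, hr, hrb⟩ := Metric.mem_nhds_iff.1 (hLc.isOpen_compl.mem_nhds hxL)
      filter_upwards [hdist r hr] with n hn
      refine ⟨fun h => ?_, fun h => absurd h hxi⟩
      obtain ⟨a, ha, hda⟩ := exists_dist_lt_of_hausdorffDist_lt (subset_closure h) hn (hfin n)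
      exact absurd ha (hrb (by rwa [mem_ball, dist_comm]))

lemma aux_usc {N : ℕ} {p q : ℝ} (hp : 1 < p) (hq : 1 < q) (Ω : ℕ → Set (EE N)) (K : Set (EE N))
    (ho : ∀ n, IsOpen (Ω n)) (hoK : IsOpen K)
    (hb : ∀ n, Ω n ⊆ closedBall 0 1) (hbK : Bornology.IsBounded K)
    (hlim : ∀ᵐ x, ∀ᶠ n in atTop, (x ∈ Ω n ↔ x ∈ K))
    {M : ℝ} (hM : Tendsto (fun n => muPQ p q (Ω n)) atTop (𝓝 M)) {R : ℝ}
    (hR : R ∈ testSet p q K) : M ≤ R := by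
  obtain ⟨v, L, hv, ⟨x0, hx0, hvx0⟩, hint, rfl⟩ := hR
  obtain ⟨w, hw, heq⟩ := hv.extend_real
  have heqK : EqOn v w K := heq.mono subset_closure
  have hbΩ : ∀ n, Bornology.IsBounded (Ω n) := fun n => isBounded_closedBall.subset (hb n)
  have hRw : rayleighQuot p q K v = rayleighQuot p q K w := by
    unfold rayleighQuot
    congr 1
    · apply setIntegral_congr_fun hoK.measurableSet
      intro x hx
      have : v =ᶠ[𝓝 x] w := heqK.eventuallyEq_of_mem (hoK.mem_nhds hx)
      simp only [this.fderiv_eq]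
    · congr 1
      apply setIntegral_congr_fun hoK.measurableSet
      intro x hx
      simp only [heqK hx]
  have hintw : ∫ x in K, |w x| ^ (q - 2) * w x = 0 := by
    rw [← hint]
    apply setIntegral_congr_fun hoK.measurableSet
    intro x hx
    simp only [heqK hx]
  rw [hRw]
  have hcont : ∀ c, Continuous fun x => |w x - c| ^ q := fun c =>
    ((hw.continuous.sub continuous_const).abs).rpow_const (fun x => Or.inr (by linarith))
  have hcont0 : Continuous fun x => |w x| ^ q := by simpa using hcont 0
  obtain ⟨B1, hB1⟩ := (hbK.isCompact_closure.union
    (isCompact_closedBall (0 : EE N) 1)).exists_bound_of_continuousOn hw.continuous.continuousOn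
  set B := max B1 0
  have hB0 : 0 ≤ B := le_max_right _ _
  have hBΩ : ∀ n, ∀ x ∈ Ω n, |w x| ≤ B := fun n x hx =>
    (hB1 x (Or.inr (hb n hx))).trans (le_max_left _ _)
  have hBK : ∀ x ∈ K, |w x| ≤ B := fun x hx =>
    (hB1 x (Or.inl (subset_closure hx))).trans (le_max_left _ _)
  set a := ∫ x in K, |w x| ^ q with ha
  have hapos : 0 < a := by
    rw [ha, setIntegral_pos_iff_support_of_nonneg_ae
      (Eventually.of_forall fun x => by positivity) (aux_intOn hbK hcont0)]
    apply IsOpen.measure_pos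
    · exact (hcont0.isOpen_support).inter hoK
    · refine ⟨x0, ?_, hx0⟩
      have : w x0 ≠ 0 := by rw [← heqK hx0]; exact hvx0
      exact (Real.rpow_pos_of_pos (abs_pos.2 this) q).ne'
  have hmin : ∀ c, a ≤ ∫ x in K, |w x - c| ^ q := by
    intro c
    have hφ : IntegrableOn (fun x => |w x| ^ (q - 2) * w x) K :=
      aux_intOn hbK ((aux_phi_cont hq).comp hw.continuous)
    have h1 : a ≤ ∫ x in K, (|w x - c| ^ q + q * c * (|w x| ^ (q - 2) * w x)) := by
      apply integral_mono (aux_intOn hbK hcont0)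
      · exact (aux_intOn hbK (hcont c)).add (hφ.const_mul _)
      · intro x
        exact aux_young hq (w x) c
    rw [integral_add (aux_intOn hbK (hcont c)) (hφ.const_mul _), integral_const_mul, hintw] at h1
    linarith
  have hδ : Tendsto (fun n => volume.real (K \ Ω n)) atTop (𝓝 0) := by
    have := tendsto_measure_of_ae_tendsto_indicator (μ := volume) (A := ∅) (As := fun n => K \ Ω n)
      (L := atTop) (B := K) MeasurableSet.empty
      (fun n => hoK.measurableSet.diff (ho n).measurableSet)
      hoK.measurableSet (aux_vol_lt hbK).ne (Eventually.of_forall fun n => sdiff_subset)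
      (by
        filter_upwards [hlim] with x hx
        filter_upwards [hx] with n hn
        simp [hn])
    rw [measure_empty] at this
    exact (ENNReal.tendsto_toReal ENNReal.zero_ne_top).comp this
  have hδ' : Tendsto (fun n => volume.real (Ω n \ K)) atTop (𝓝 0) := by
    have := tendsto_measure_of_ae_tendsto_indicator (μ := volume) (A := ∅) (As := fun n => Ω n \ K)
      (L := atTop) (B := closedBall 0 1) MeasurableSet.empty
      (fun n => (ho n).measurableSet.diff hoK.measurableSet)
      measurableSet_closedBall (aux_vol_lt isBounded_closedBall).ne
      (Eventually.of_forall fun n => sdiff_subset.trans (hb n))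
      (by
        filter_upwards [hlim] with x hx
        filter_upwards [hx] with n hn
        simp [hn])
    rw [measure_empty] at this
    exact (ENNReal.tendsto_toReal ENNReal.zero_ne_top).comp this
  have hAlim : Tendsto (fun n => a - (2 * B) ^ q * volume.real (K \ Ω n)) atTop (𝓝 a) := by
    simpa using tendsto_const_nhds.sub (hδ.const_mul ((2 * B) ^ q))
  have hden : ∀ n c, |c| ≤ B → a - (2 * B) ^ q * volume.real (K \ Ω n)
      ≤ ∫ x in Ω n, |w x - c| ^ q := by
    intro n c hc
    have hKi := aux_intOn hbK (hcont c)
    have h1 : ∫ x in K, |w x - c| ^ q = (∫ x in K ∩ Ω n, |w x - c| ^ q)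
        + ∫ x in K \ Ω n, |w x - c| ^ q :=
      (integral_inter_add_sdiff (ho n).measurableSet hKi).symm
    have h2 : ∫ x in K ∩ Ω n, |w x - c| ^ q ≤ ∫ x in Ω n, |w x - c| ^ q := by
      apply setIntegral_mono_set (aux_intOn (hbΩ n) (hcont c))
      · exact Eventually.of_forall fun x => by positivity
      · exact (inter_subset_right).eventuallyLE
    have h3 : ∫ x in K \ Ω n, |w x - c| ^ q ≤ (2 * B) ^ q * volume.real (K \ Ω n) := by
      have hfs : volume (K \ Ω n) < ⊤ := (measure_mono sdiff_subset).trans_lt (aux_vol_lt hbK)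
      refine (le_abs_self _).trans (norm_setIntegral_le_of_norm_le_const
        (f := fun x => |w x - c| ^ q) hfs (fun x hx => ?_))
      rw [Real.norm_of_nonneg (by positivity)]
      apply Real.rpow_le_rpow (abs_nonneg _) _ (by linarith)
      have := abs_sub (w x) c
      linarith [hBK x hx.1]
    linarith [hmin c]
  set G := ∫ x in K, ‖fderiv ℝ w x‖ ^ p with hG
  have hnum : ∀ n, ∫ x in Ω n, ‖fderiv ℝ w x‖ ^ p ≤ G + (L : ℝ) ^ p * volume.real (Ω n \ K) := by
    intro n
    have h1 : ∫ x in Ω n, ‖fderiv ℝ w x‖ ^ p = (∫ x in Ω n ∩ K, ‖fderiv ℝ w x‖ ^ p)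
        + ∫ x in Ω n \ K, ‖fderiv ℝ w x‖ ^ p :=
      (integral_inter_add_sdiff hoK.measurableSet (aux_grad_int hp (aux_vol_lt (hbΩ n)) hw)).symm
    have h2 : ∫ x in Ω n ∩ K, ‖fderiv ℝ w x‖ ^ p ≤ G := by
      apply setIntegral_mono_set (aux_grad_int hp (aux_vol_lt hbK) hw)
      · exact Eventually.of_forall fun x => by positivity
      · exact (inter_subset_right).eventuallyLE
    have h3 := aux_grad_le (S := Ω n \ K) hp
      ((measure_mono sdiff_subset).trans_lt (aux_vol_lt (hbΩ n))) hw
    linarith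
  have hpq0 : 0 < p / q := by positivity
  have hfin : Tendsto (fun n => (G + (L : ℝ) ^ p * volume.real (Ω n \ K)) /
      (a - (2 * B) ^ q * volume.real (K \ Ω n)) ^ (p / q)) atTop (𝓝 (G / a ^ (p / q))) := by
    apply Tendsto.div
    · simpa using tendsto_const_nhds.add (hδ'.const_mul ((L : ℝ) ^ p))
    · exact hAlim.rpow_const (Or.inl hapos.ne')
    · positivity
  refine le_of_tendsto_of_tendsto hM hfin ?_
  filter_upwards [hAlim.eventually (lt_mem_nhds hapos)] with n hn
  refine (aux_mu_le hp hq (ho n) (hbΩ n) hw hB0 (hBΩ n) hn (hden n)).2.trans ?_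
  gcongr
  exact hnum n

lemma aux_main {N : ℕ} {p q : ℝ} (hp : 1 < p) (hpq : p < q) :
    ∃ K : Set (EE N), IsOpen K ∧ Bornology.IsBounded K ∧
      Convex ℝ K ∧ K.Nonempty ∧
      ∀ Ω : Set (EE N), IsOpen Ω → Bornology.IsBounded Ω →
        Convex ℝ Ω → 0 ∈ Ω → diam Ω = 1 →
        muPQ p q Ω ≤ muPQ p q K * diam K ^ (p + N * p / q - N) := by
  have hq : 1 < q := hp.trans hpq
  have hs : 0 < 1 - p / q := by
    have : p / q < 1 := (div_lt_one (by linarith)).2 hpq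
    linarith
  set S : Set ℝ := {m | ∃ Ω : Set (EE N), IsOpen Ω ∧ Bornology.IsBounded Ω ∧
        Convex ℝ Ω ∧ 0 ∈ Ω ∧ diam Ω = 1 ∧ m = muPQ p q Ω} with hS
  by_cases htriv : ∀ m ∈ S, m ≤ 0
  · refine ⟨ball 0 1, isOpen_ball, isBounded_ball, convex_ball _ _, ⟨0, by simp⟩, ?_⟩
    intro Ω h1 h2 h3 h4 h5
    refine (htriv _ ⟨Ω, h1, h2, h3, h4, h5, rfl⟩).trans ?_
    exact mul_nonneg (aux_mu_nonneg _ _ _) (Real.rpow_nonneg diam_nonneg _)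
  push Not at htriv
  obtain ⟨m0, hm0, hm0pos⟩ := htriv
  set C0 : ℝ := (((1 / 8 : ℝ) ^ q * (1 / 4) ^ N) ^ (p / q))⁻¹ with hC0
  have hsub : ∀ Ω : Set (EE N), Bornology.IsBounded Ω → 0 ∈ Ω → diam Ω = 1 →
      Ω ⊆ closedBall 0 1 := fun Ω hb h0 hd x hx =>
    mem_closedBall.2 (hd ▸ dist_le_diam_of_mem hb hx h0)
  have hbdd : BddAbove S := by
    refine ⟨C0 * volume.real (closedBall (0 : EE N) 1) ^ (1 - p / q), ?_⟩
    rintro m ⟨Ω, h1, h2, h3, h4, h5, rfl⟩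
    refine (aux_upper hp hq h1 h2 h3 ⟨0, h4⟩ h5).2.trans ?_
    gcongr
    · exact (aux_vol_lt isBounded_closedBall).ne
    · exact hsub Ω h2 h4 h5
  obtain ⟨u, -, hu, huS⟩ := exists_seq_tendsto_sSup ⟨m0, hm0⟩ hbdd
  set M := sSup S
  have hMpos : 0 < M := hm0pos.trans_le (le_csSup hbdd hm0)
  choose Ω h1 h2 h3 h4 h5 h6 using huS
  obtain ⟨C, φ, hφ, hCc, hCconv, hCd, hClim⟩ := aux_blaschke Ω h1 h3 h4 h2 h5
  have hK0 : IsOpen (interior C) := isOpen_interior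
  have hKb : Bornology.IsBounded (interior C) := hCc.isBounded.subset interior_subset
  have hMlim : Tendsto (fun n => muPQ p q (Ω (φ n))) atTop (𝓝 M) := by
    simp only [← h6]
    exact hu.comp hφ.tendsto_atTop
  have hVlim : Tendsto (fun n => volume.real (Ω (φ n))) atTop (𝓝 (volume.real (interior C))) := by
    have := tendsto_measure_of_ae_tendsto_indicator (μ := volume) (A := interior C)
      (As := fun n => Ω (φ n))
      (L := atTop) (B := closedBall 0 1) hK0.measurableSet
      (fun n => (h1 _).measurableSet)
      measurableSet_closedBall (aux_vol_lt isBounded_closedBall).ne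
      (Eventually.of_forall fun n => hsub _ (h2 _) (h4 _) (h5 _)) hClim
    exact (ENNReal.tendsto_toReal (aux_vol_lt hKb).ne).comp this
  have hMle : M ≤ C0 * volume.real (interior C) ^ (1 - p / q) := by
    refine le_of_tendsto_of_tendsto' hMlim
      ((hVlim.rpow_const (Or.inr hs.le)).const_mul C0) (fun n => ?_)
    exact (aux_upper hp hq (h1 _) (h2 _) (h3 _) ⟨0, h4 _⟩ (h5 _)).2
  have hKne : (interior C).Nonempty := by
    by_contra hne
    rw [not_nonempty_iff_eq_empty] at hne
    rw [hne] at hMle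
    simp [Real.zero_rpow hs.ne'] at hMle
    linarith
  have hKd : diam (interior C) = 1 := by
    rw [← diam_closure, hCconv.closure_interior_eq_closure_of_nonempty_interior hKne,
      diam_closure, hCd]
  refine ⟨interior C, hK0, hKb, hCconv.interior, hKne, ?_⟩
  intro Ω' g1 g2 g3 g4 g5
  rw [hKd, Real.one_rpow, mul_one]
  refine (le_csSup hbdd ⟨Ω', g1, g2, g3, g4, g5, rfl⟩).trans ?_
  apply le_csInf (aux_upper hp hq hK0 hKb hCconv.interior hKne hKd).1
  intro R hR
  exact aux_usc hp hq (fun n => Ω (φ n)) (interior C) (fun n => h1 _) hK0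
    (fun n => hsub _ (h2 _) (h4 _) (h5 _)) hKb hClim hMlim hR

open Pointwise in
/-- Theorem 4.4, existence of a maximizer. Let `1 < p < q < p*`. Then
there exists an open bounded convex set `K ⊂ ℝ^N` maximizing the scale invariant quantity
`μ_{p,q}(Ω) · diam(Ω)^(p + Np/q - N)` among all open bounded convex sets `Ω ⊂ ℝ^N`. -/
theorem exists_maximizer_muPQ_diam {N : ℕ} (hN : 2 ≤ N) (p q : ℝ) (hp : 1 < p)
    (hpq : p < q) (hq : ltCritical N p q) :
    ∃ K : Set (EuclideanSpace ℝ (Fin N)), IsOpen K ∧ Bornology.IsBounded K ∧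
      Convex ℝ K ∧ K.Nonempty ∧
      ∀ Ω : Set (EuclideanSpace ℝ (Fin N)), IsOpen Ω → Bornology.IsBounded Ω →
        Convex ℝ Ω → Ω.Nonempty →
        muPQ p q Ω * diam Ω ^ (p + N * p / q - N) ≤
          muPQ p q K * diam K ^ (p + N * p / q - N) := by
  obtain ⟨K, hKo, hKb, hKc, hKn, hK⟩ := aux_main (N := N) hp hpq
  refine ⟨K, hKo, hKb, hKc, hKn, ?_⟩
  intro Ω ho hb hc hne
  obtain ⟨x0, hx0⟩ := hne
  have : Nontrivial (EuclideanSpace ℝ (Fin N)) := by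
    have : Nonempty (Fin N) := ⟨⟨0, by omega⟩⟩
    infer_instance
  have hdpos : 0 < diam Ω := by
    apply Metric.diam_pos _ hb
    by_contra hsub
    rw [not_nontrivial_iff] at hsub
    have h1 : Ω = {x0} := hsub.eq_singleton_of_mem hx0
    rw [h1] at ho
    exact not_isOpen_singleton x0 ho
  set d := diam Ω with hd
  set Ω' : Set (EuclideanSpace ℝ (Fin N)) := (fun y => x0 + d • y) ⁻¹' Ω with hΩ'
  have hpre : (fun x => d⁻¹ • (x - x0)) ⁻¹' Ω' = Ω := by
    ext x
    simp [hΩ', smul_smul, hdpos.ne']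
  have ho' : IsOpen Ω' := ho.preimage (by fun_prop)
  have hc' : Convex ℝ Ω' := by
    have := (hc.translate_preimage_right x0).smul_preimage d
    exact this
  have h0' : (0 : EuclideanSpace ℝ (Fin N)) ∈ Ω' := by simpa [hΩ'] using hx0
  have hsc : (fun y => x0 + y) '' (d • Ω') = Ω := by
    ext x
    constructor
    · rintro ⟨_, ⟨y, hy, rfl⟩, rfl⟩
      exact hy
    · intro hx
      refine ⟨x - x0, ⟨d⁻¹ • (x - x0), ?_, ?_⟩, by simp⟩
      · simpa [hΩ', smul_smul, hdpos.ne'] using hx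
      · simp [smul_smul, hdpos.ne']
  have hd' : diam Ω' = 1 := by
    have h1 : diam Ω = d * diam Ω' := by
      conv_lhs => rw [← hsc]
      rw [(isometry_add_left x0).diam_image, diam_smul₀, Real.norm_of_nonneg hdpos.le]
    rw [← hd] at h1
    have : d * (diam Ω' - 1) = 0 := by linarith
    rcases mul_eq_zero.1 this with h | h <;> linarith
  have hb' : Bornology.IsBounded Ω' := by
    by_contra h
    rw [Metric.diam_eq_zero_of_unbounded h] at hd'
    norm_num at hd'
  have h1 := aux_scale (p := p) (q := q) hdpos x0 ho'
    (aux_upper hp (hp.trans hpq) ho' hb' hc' ⟨0, h0'⟩ hd').1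
  rw [hpre] at h1
  exact h1.trans (hK Ω' ho' hb' hc' h0' hd')
end

section
/- Let 1 < p < q < p*. For every c > 0, the infimum of μ_{p,q}(Ω) over all open bounded convex sets Ω ⊂ ℝ^N with diam(Ω) ≤ c equals 0; in particular, for every ε > 0 there exists an open bounded convex Ω with diam(Ω) = c and 0 < μ_{p,q}(Ω) < ε, so no lower bound for μ_{p,q} in terms of the diameter alone is possible when q > p. -/
open MeasureTheory Metric Set Real

theorem lint_scale {N : ℕ} (f : EuclideanSpace ℝ (Fin N) → ENNReal) (hf : Measurable f)
    (a : EuclideanSpace ℝ (Fin N)) (s : ℝ) (hs : 0 < s) :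
    ∫⁻ y, f (a + s • y) = ENNReal.ofReal ((s ^ N)⁻¹) * ∫⁻ y, f y := by
  have h1 : ∫⁻ y, f (a + s • y) = ∫⁻ z, f (a + z) ∂(Measure.map (fun y => s • y) volume) := by
    rw [lintegral_map (by fun_prop) (by fun_prop)]
  rw [h1, Measure.map_addHaar_smul _ hs.ne', lintegral_smul_measure, lintegral_add_left_eq_self]
  simp [abs_of_pos hs]

theorem lint_convex_le {N : ℕ} (Ω : Set (EuclideanSpace ℝ (Fin N))) (hO : IsOpen Ω)
    (hC : Convex ℝ Ω) (f : EuclideanSpace ℝ (Fin N) → ENNReal) (hf : Measurable f)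
    (x : EuclideanSpace ℝ (Fin N)) (hx : x ∈ Ω) (t : ℝ) (ht0 : 0 < t) (ht1 : t ≤ 1) :
    ∫⁻ y in Ω, f ((1 - t) • x + t • y) ≤ ENNReal.ofReal ((t ^ N)⁻¹) * ∫⁻ y in Ω, f y := by
  have hm := hO.measurableSet
  rw [← lintegral_indicator hm, ← lintegral_indicator hm,
    ← lint_scale _ (hf.indicator hm) ((1 - t) • x) t ht0]
  apply lintegral_mono
  intro y
  by_cases hy : y ∈ Ω
  · have : (1 - t) • x + t • y ∈ Ω := hC hx hy (by linarith) ht0.le (by ring)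
    simp [hy, this]
  · simp [hy]

theorem lint_lint_le {N : ℕ} (Ω : Set (EuclideanSpace ℝ (Fin N))) (hO : IsOpen Ω)
    (hC : Convex ℝ Ω) (f : EuclideanSpace ℝ (Fin N) → ENNReal) (hf : Measurable f)
    (t : ℝ) (ht0 : 0 < t) (ht1 : t < 1) :
    ∫⁻ x in Ω, ∫⁻ y in Ω, f ((1 - t) • x + t • y) ≤
      ENNReal.ofReal (2 ^ N) * (∫⁻ y in Ω, f y) * volume Ω := by
  have hm := hO.measurableSet
  have key : ∀ s : ℝ, 1/2 ≤ s → s ≤ 1 → ∀ x ∈ Ω,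
      ∫⁻ y in Ω, f ((1 - s) • x + s • y) ≤ ENNReal.ofReal (2 ^ N) * (∫⁻ y in Ω, f y) := by
    intro s hs hs1 x hx
    refine (lint_convex_le Ω hO hC f hf x hx s (by linarith) hs1).trans ?_
    gcongr
    rw [← inv_pow]
    gcongr
    rw [inv_le_comm₀ (by linarith) (by norm_num)]
    linarith
  rcases le_total (1/2) t with h | h
  · calc _ ≤ ∫⁻ x in Ω, ENNReal.ofReal (2 ^ N) * (∫⁻ y in Ω, f y) :=
          setLIntegral_mono' hm (fun x hx => key t h ht1.le x hx)
      _ = _ := by simp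
  · rw [lintegral_lintegral_swap (by fun_prop)]
    calc _ ≤ ∫⁻ x in Ω, ENNReal.ofReal (2 ^ N) * (∫⁻ y in Ω, f y) := by
          refine setLIntegral_mono' hm (fun x hx => ?_)
          have := key (1 - t) (by linarith) (by linarith) x hx
          simpa [add_comm] using this
      _ = _ := by simp

theorem ftc_ae {N : ℕ} (V : EuclideanSpace ℝ (Fin N) → ℝ) (K : NNReal) (hV : LipschitzWith K V)
    (x : EuclideanSpace ℝ (Fin N)) :
    ∀ᵐ y, ‖V y - V x‖ₑ ≤ ‖y - x‖ₑ *
      ∫⁻ t in Ioo (0:ℝ) 1, ‖fderiv ℝ V ((1 - t) • x + t • y)‖ₑ := by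
  have hms : MeasurableSet {z | DifferentiableAt ℝ V z} := measurableSet_of_differentiableAt ℝ V
  have h1 : ∀ᵐ t ∂(volume.restrict (Ioo (0:ℝ) 1)), ∀ᵐ y : EuclideanSpace ℝ (Fin N),
      DifferentiableAt ℝ V ((1 - t) • x + t • y) := by
    filter_upwards [ae_restrict_mem measurableSet_Ioo] with t ht
    have h0 : volume {z | DifferentiableAt ℝ V z}ᶜ = 0 := hV.ae_differentiableAt
    have := lint_scale ({z | DifferentiableAt ℝ V z}ᶜ.indicator 1)
      (measurable_one.indicator hms.compl) ((1 - t) • x) t ht.1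
    rw [lintegral_indicator_one hms.compl, h0, mul_zero, lintegral_eq_zero_iff] at this
    · filter_upwards [this] with y hy
      by_contra hcon
      simp [indicator, hcon] at hy
    · exact (measurable_one.indicator hms.compl).comp (by fun_prop)
  have h2 : ∀ᵐ y : EuclideanSpace ℝ (Fin N), ∀ᵐ t ∂(volume.restrict (Ioo (0:ℝ) 1)), 
      DifferentiableAt ℝ V ((1 - t) • x + t • y) := by
    refine (Measure.ae_ae_comm ?_).1 h1
    have : Measurable (fun z : ℝ × EuclideanSpace ℝ (Fin N) => (1 - z.1) • x + z.1 • z.2) := by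
      fun_prop
    exact this hms
  filter_upwards [h2] with y hy
  set φ : ℝ → ℝ := fun t => V ((1 - t) • x + t • y) with hφ
  have hφL : LipschitzWith (K * ‖y - x‖₊) φ := by
    refine LipschitzWith.of_dist_le_mul fun s t => ?_
    refine (hV.dist_le_mul _ _).trans ?_
    rw [NNReal.coe_mul, mul_assoc]
    gcongr
    rw [dist_eq_norm, dist_eq_norm, coe_nnnorm, mul_comm, ← norm_smul]
    apply le_of_eq; congr 1; module
  have hF := (hφL.lipschitzOnWith (s := uIcc 0 1)).absolutelyContinuousOnInterval.integral_deriv_eq_sub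
  have e1 : V y - V x = ∫ t in Ioo (0:ℝ) 1, deriv φ t := by
    rw [← integral_Ioc_eq_integral_Ioo, ← intervalIntegral.integral_of_le zero_le_one, hF]
    simp [hφ]
  rw [e1]
  refine (enorm_integral_le_lintegral_enorm _).trans ?_
  rw [← lintegral_const_mul' _ _ (by simp)]
  refine lintegral_mono_ae ?_
  filter_upwards [hy] with t ht
  have hd : HasDerivAt φ (fderiv ℝ V ((1 - t) • x + t • y) (y - x)) t := by
    have hin : HasDerivAt (fun t : ℝ => (1 - t) • x + t • y) (y - x) t := by
      have a1 : HasDerivAt (fun t : ℝ => x + t • (y - x)) (y - x) t := by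
        simpa using ((hasDerivAt_id t).smul_const (y - x)).const_add x
      convert a1 using 2
      module
    exact ht.hasFDerivAt.comp_hasDerivAt t hin
  rw [hd.deriv, mul_comm]
  exact ContinuousLinearMap.le_opENorm _ _

theorem holder_pow {α : Type*} [MeasurableSpace α] (μ : Measure α) (q : ℝ) (hq : 1 < q)
    (u f : α → ENNReal) (hu : AEMeasurable u μ) (hf : AEMeasurable f μ) :
    (∫⁻ a, u a * f a ∂μ) ^ q ≤ (∫⁻ a, u a ^ (q / (q - 1)) ∂μ) ^ (q - 1) * ∫⁻ a, f a ^ q ∂μ := by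
  have hq0 : 0 < q := by linarith
  have hq1 : 0 < q - 1 := by linarith
  have hc : (q / (q - 1)).HolderConjugate q := by
    have := (Real.HolderConjugate.conjExponent hq).symm
    simpa [Real.conjExponent] using this
  have h := ENNReal.lintegral_mul_le_Lp_mul_Lq μ hc hu hf
  have h2 := ENNReal.rpow_le_rpow h hq0.le
  rw [ENNReal.mul_rpow_of_nonneg _ _ hq0.le, ← ENNReal.rpow_mul, ← ENNReal.rpow_mul] at h2
  have e1 : 1 / (q / (q - 1)) * q = q - 1 := by field_simp
  have e2 : 1 / q * q = 1 := by field_simp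
  rw [e1, e2, ENNReal.rpow_one] at h2
  simpa using h2

theorem lint_rpow_Ioo_ne_top (r : ℝ) (hr : -1 < r) :
    ∫⁻ t in Ioo (0:ℝ) 1, ENNReal.ofReal (t ^ r) ≠ ⊤ := by
  have h := (intervalIntegral.integrableOn_Ioo_rpow_iff (s := r) (t := 1) one_pos).2 hr
  have h2 : ∫⁻ t in Ioo (0:ℝ) 1, ENNReal.ofReal (t ^ r) ≤ ∫⁻ t in Ioo (0:ℝ) 1, ‖t ^ r‖ₑ := by
    apply lintegral_mono
    intro t
    exact Real.ofReal_le_enorm _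
  exact (h2.trans_lt h.2).ne

theorem potential_bound {N : ℕ} (p q : ℝ) (hp : 1 < p) (hpq : p < q)
    (hNq : N * (q / p - 1) < q)
    (Ω : Set (EuclideanSpace ℝ (Fin N))) (hO : IsOpen Ω) (hC : Convex ℝ Ω)
    (hfin : volume Ω ≠ ⊤) :
    ∃ C : ENNReal, C ≠ ⊤ ∧ ∀ g : EuclideanSpace ℝ (Fin N) → ENNReal, Measurable g →
      ∫⁻ x in Ω, (∫⁻ y in Ω, ∫⁻ t in Ioo (0:ℝ) 1, g ((1 - t) • x + t • y)) ^ q ≤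
        C * (∫⁻ x in Ω, g x ^ p) ^ (q / p) := by
  have hm := hO.measurableSet
  have hp0 : 0 < p := by linarith
  have hq0 : 0 < q := by linarith
  have hr0 : 0 < q / p - 1 := by rw [sub_pos, lt_div_iff₀ hp0]; linarith
  obtain ⟨b, hb1, hb2⟩ := exists_between (show N * (q / p - 1) - 1 < q - 1 by linarith)
  have hq1 : 0 < q - 1 := by linarith
  set A := ∫⁻ t in Ioo (0:ℝ) 1, ENNReal.ofReal (t ^ (-(b / (q - 1)))) with hA
  have hAt : A ≠ ⊤ := by
    apply lint_rpow_Ioo_ne_top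
    rw [neg_lt_neg_iff, div_lt_one hq1]; exact hb2
  set B := ∫⁻ t in Ioo (0:ℝ) 1, ENNReal.ofReal (t ^ (b - N * (q / p - 1))) with hB
  have hBt : B ≠ ⊤ := by
    apply lint_rpow_Ioo_ne_top
    linarith
  set m := volume Ω with hmdef
  refine ⟨A ^ (q - 1) * (((m ^ (p - 1)) ^ (q / p)) * (ENNReal.ofReal (2 ^ N) * m) * B), ?_, ?_⟩
  · refine ENNReal.mul_ne_top (ENNReal.rpow_ne_top_of_nonneg hq1.le hAt) ?_
    refine ENNReal.mul_ne_top (ENNReal.mul_ne_top ?_ (ENNReal.mul_ne_top (by simp) hfin)) hBt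
    exact ENNReal.rpow_ne_top_of_nonneg (by positivity)
      (ENNReal.rpow_ne_top_of_nonneg (by linarith) hfin)
  intro g hg
  set S := ∫⁻ x in Ω, g x ^ p with hS
  set G : ℝ → EuclideanSpace ℝ (Fin N) → ENNReal :=
    fun t x => ∫⁻ y in Ω, g ((1 - t) • x + t • y) with hG
  have hGm : Measurable (fun z : EuclideanSpace ℝ (Fin N) × ℝ => G z.2 z.1) := by
    apply Measurable.lintegral_prod_right
    fun_prop
  have hgp : Measurable (fun x => g x ^ p) := by fun_prop
  -- bound on `G_t ^ q`
  have hGq : ∀ t ∈ Ioo (0:ℝ) 1, ∫⁻ x in Ω, G t x ^ q ≤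
      (m ^ (p - 1)) ^ (q / p) * (ENNReal.ofReal ((t ^ N)⁻¹) * S) ^ (q / p - 1) *
        (ENNReal.ofReal (2 ^ N) * S * m) := by
    intro t ht
    have hpt : ∀ x ∈ Ω, G t x ^ q ≤
        (m ^ (p - 1)) ^ (q / p) * (ENNReal.ofReal ((t ^ N)⁻¹) * S) ^ (q / p - 1) *
          ∫⁻ y in Ω, g ((1 - t) • x + t • y) ^ p := by
      intro x hx
      set H := ∫⁻ y in Ω, g ((1 - t) • x + t • y) ^ p with hH
      have h1 : G t x ^ p ≤ m ^ (p - 1) * H := by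
        have := holder_pow (volume.restrict Ω) p hp (fun _ => 1)
          (fun y => g ((1 - t) • x + t • y)) (by fun_prop) (by fun_prop)
        simpa [hG, hH] using this
      have h2 : H ≤ ENNReal.ofReal ((t ^ N)⁻¹) * S :=
        lint_convex_le Ω hO hC _ hgp x hx t ht.1 ht.2.le
      calc G t x ^ q = (G t x ^ p) ^ (q / p) := by
            rw [← ENNReal.rpow_mul]; congr 1; field_simp
        _ ≤ (m ^ (p - 1) * H) ^ (q / p) := by gcongr
        _ = (m ^ (p - 1)) ^ (q / p) * (H ^ (q / p - 1) * H) := by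
            rw [ENNReal.mul_rpow_of_nonneg _ _ (by positivity)]
            congr 1
            conv_rhs => rw [← ENNReal.rpow_one H, ← ENNReal.rpow_mul, one_mul]
            rw [← ENNReal.rpow_add_of_nonneg _ _ hr0.le zero_le_one]
            congr 1; ring
        _ ≤ (m ^ (p - 1)) ^ (q / p) * ((ENNReal.ofReal ((t ^ N)⁻¹) * S) ^ (q / p - 1) * H) := by
            gcongr
        _ = _ := by rw [mul_assoc]
    calc _ ≤ ∫⁻ x in Ω, (m ^ (p - 1)) ^ (q / p) *
            (ENNReal.ofReal ((t ^ N)⁻¹) * S) ^ (q / p - 1) *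
              ∫⁻ y in Ω, g ((1 - t) • x + t • y) ^ p := setLIntegral_mono' hm hpt
      _ = (m ^ (p - 1)) ^ (q / p) * (ENNReal.ofReal ((t ^ N)⁻¹) * S) ^ (q / p - 1) *
            ∫⁻ x in Ω, ∫⁻ y in Ω, g ((1 - t) • x + t • y) ^ p := by
          rw [lintegral_const_mul]
          apply Measurable.lintegral_prod_right
          fun_prop
      _ ≤ _ := by
          gcongr
          exact lint_lint_le Ω hO hC _ hgp t ht.1 ht.2
  have hW : ∀ x, (∫⁻ y in Ω, ∫⁻ t in Ioo (0:ℝ) 1, g ((1 - t) • x + t • y)) ^ q ≤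
      A ^ (q - 1) * ∫⁻ t in Ioo (0:ℝ) 1, ENNReal.ofReal (t ^ b) * G t x ^ q := by
    intro x
    rw [lintegral_lintegral_swap (by fun_prop)]
    have hGx : Measurable (fun t => G t x) := hGm.comp (measurable_prodMk_left (x := x))
    have h := holder_pow (volume.restrict (Ioo (0:ℝ) 1)) q (by linarith)
      (fun t => ENNReal.ofReal (t ^ (-(b / q))))
      (fun t => ENNReal.ofReal (t ^ (b / q)) * G t x) (by fun_prop) (by fun_prop)
    have e0 : ∫⁻ t in Ioo (0:ℝ) 1, G t x = ∫⁻ t in Ioo (0:ℝ) 1,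
        ENNReal.ofReal (t ^ (-(b / q))) * (ENNReal.ofReal (t ^ (b / q)) * G t x) := by
      refine setLIntegral_congr_fun measurableSet_Ioo fun t ht => ?_
      rw [← mul_assoc, ← ENNReal.ofReal_mul (Real.rpow_nonneg ht.1.le _), ← Real.rpow_add ht.1]
      simp
    have e1 : ∫⁻ t in Ioo (0:ℝ) 1, ENNReal.ofReal (t ^ (-(b / q))) ^ (q / (q - 1)) = A := by
      refine setLIntegral_congr_fun measurableSet_Ioo fun t ht => ?_
      rw [ENNReal.ofReal_rpow_of_pos (Real.rpow_pos_of_pos ht.1 _), ← Real.rpow_mul ht.1.le]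
      congr 2; field_simp
    have e2 : ∫⁻ t in Ioo (0:ℝ) 1, (ENNReal.ofReal (t ^ (b / q)) * G t x) ^ q =
        ∫⁻ t in Ioo (0:ℝ) 1, ENNReal.ofReal (t ^ b) * G t x ^ q := by
      refine setLIntegral_congr_fun measurableSet_Ioo fun t ht => ?_
      rw [ENNReal.mul_rpow_of_nonneg _ _ hq0.le,
        ENNReal.ofReal_rpow_of_pos (Real.rpow_pos_of_pos ht.1 _), ← Real.rpow_mul ht.1.le]
      congr 3; field_simp
    rw [e1, e2, ← e0] at h
    exact h
  have hSq : S ^ (q / p - 1) * S = S ^ (q / p) := by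
    conv_lhs => rw [← ENNReal.rpow_one S, ← ENNReal.rpow_mul, one_mul]
    rw [← ENNReal.rpow_add_of_nonneg _ _ hr0.le zero_le_one]
    congr 1; ring
  have hmeas2 : Measurable (fun z : EuclideanSpace ℝ (Fin N) × ℝ =>
      ENNReal.ofReal (z.2 ^ b) * G z.2 z.1 ^ q) := by fun_prop
  calc _ ≤ ∫⁻ x in Ω, A ^ (q - 1) *
          ∫⁻ t in Ioo (0:ℝ) 1, ENNReal.ofReal (t ^ b) * G t x ^ q := lintegral_mono hW
    _ = A ^ (q - 1) * ∫⁻ x in Ω, ∫⁻ t in Ioo (0:ℝ) 1, ENNReal.ofReal (t ^ b) * G t x ^ q := by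
        rw [lintegral_const_mul]
        exact hmeas2.lintegral_prod_right
    _ = A ^ (q - 1) * ∫⁻ t in Ioo (0:ℝ) 1, ∫⁻ x in Ω, ENNReal.ofReal (t ^ b) * G t x ^ q := by
        rw [lintegral_lintegral_swap hmeas2.aemeasurable]
    _ ≤ A ^ (q - 1) * ∫⁻ t in Ioo (0:ℝ) 1, ((m ^ (p - 1)) ^ (q / p) *
          (ENNReal.ofReal (2 ^ N) * m) * S ^ (q / p)) *
            ENNReal.ofReal (t ^ (b - N * (q / p - 1))) := by
        refine mul_le_mul' le_rfl ?_
        refine setLIntegral_mono' measurableSet_Ioo fun t ht => ?_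
        rw [lintegral_const_mul' _ _ (by simp)]
        calc _ ≤ ENNReal.ofReal (t ^ b) * ((m ^ (p - 1)) ^ (q / p) *
              (ENNReal.ofReal ((t ^ N)⁻¹) * S) ^ (q / p - 1) *
                (ENNReal.ofReal (2 ^ N) * S * m)) := by gcongr; exact hGq t ht
          _ = ((m ^ (p - 1)) ^ (q / p) * (ENNReal.ofReal (2 ^ N) * m) * (S ^ (q / p - 1) * S)) *
            (ENNReal.ofReal (t ^ b) * ENNReal.ofReal ((t ^ N)⁻¹) ^ (q / p - 1)) := by
              rw [ENNReal.mul_rpow_of_nonneg _ _ hr0.le]; ring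
          _ = _ := by
              rw [hSq]
              congr 1
              have : 0 < t := ht.1
              rw [ENNReal.ofReal_rpow_of_pos (by positivity),
                ← ENNReal.ofReal_mul (by positivity)]
              congr 1
              rw [← Real.rpow_natCast, ← Real.rpow_neg this.le, ← Real.rpow_mul this.le,
                ← Real.rpow_add this]
              congr 1; ring
    _ = _ := by
        rw [lintegral_const_mul _ (by fun_prop)]
        ring

theorem poincare_mean {N : ℕ} (p q : ℝ) (hp : 1 < p) (hpq : p < q)
    (hNq : N * (q / p - 1) < q)
    (Ω : Set (EuclideanSpace ℝ (Fin N))) (hO : IsOpen Ω) (hC : Convex ℝ Ω)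
    (hbd : Bornology.IsBounded Ω) (hne : Ω.Nonempty) :
    ∃ C : ENNReal, C ≠ ⊤ ∧ ∀ (V : EuclideanSpace ℝ (Fin N) → ℝ) (K : NNReal), LipschitzWith K V →
      ∃ c : ℝ, ∫⁻ x in Ω, ‖V x - c‖ₑ ^ q ≤
        C * (∫⁻ x in Ω, ‖fderiv ℝ V x‖ₑ ^ p) ^ (q / p) := by
  have hm := hO.measurableSet
  have hq0 : 0 < q := by linarith
  have hfin : volume Ω ≠ ⊤ := hbd.measure_lt_top.ne
  have hpos : 0 < volume.real Ω := by
    rw [measureReal_def]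
    exact ENNReal.toReal_pos (hO.measure_pos volume hne).ne' hfin
  obtain ⟨C, hCt, hCb⟩ := potential_bound p q hp hpq hNq Ω hO hC hfin
  set F : ENNReal := ‖(volume.real Ω)⁻¹‖ₑ * ENNReal.ofReal (diam Ω) with hF
  have hFt : F ≠ ⊤ := ENNReal.mul_ne_top (by simp) (by simp)
  refine ⟨F ^ q * C, ENNReal.mul_ne_top (ENNReal.rpow_ne_top_of_nonneg hq0.le hFt) hCt, ?_⟩
  intro V K hV
  have hVi : IntegrableOn V Ω := by
    have : IntegrableOn V (closure Ω) :=
      hV.continuous.continuousOn.integrableOn_compact hbd.isCompact_closure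
    exact this.mono_set subset_closure
  have hgm : Measurable (fun x => ‖fderiv ℝ V x‖ₑ) := (measurable_fderiv ℝ V).enorm
  have : IsFiniteMeasure (volume.restrict Ω) := ⟨by simpa using hbd.measure_lt_top⟩
  refine ⟨(volume.real Ω)⁻¹ * ∫ y in Ω, V y, ?_⟩
  have hpt : ∀ x ∈ Ω, ‖V x - (volume.real Ω)⁻¹ * ∫ y in Ω, V y‖ₑ ≤
      F * ∫⁻ y in Ω, ∫⁻ t in Ioo (0:ℝ) 1, ‖fderiv ℝ V ((1 - t) • x + t • y)‖ₑ := by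
    intro x hx
    have e : V x - (volume.real Ω)⁻¹ * ∫ y in Ω, V y =
        (volume.real Ω)⁻¹ * ∫ y in Ω, (V x - V y) := by
      rw [integral_sub (integrable_const _) hVi, setIntegral_const]
      simp only [smul_eq_mul]
      field_simp
    rw [e, enorm_mul, hF, mul_assoc]
    gcongr
    refine (enorm_integral_le_lintegral_enorm _).trans ?_
    rw [← lintegral_const_mul' _ _ (by simp)]
    refine lintegral_mono_ae ?_
    filter_upwards [ae_restrict_mem hm, ae_restrict_of_ae (ftc_ae V K hV x)] with y hy h
    rw [enorm_sub_rev]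
    refine h.trans ?_
    gcongr
    rw [← ofReal_norm]
    apply ENNReal.ofReal_le_ofReal
    rw [← dist_eq_norm]
    exact dist_le_diam_of_mem hbd hy hx
  calc _ ≤ ∫⁻ x in Ω, F ^ q * (∫⁻ y in Ω, ∫⁻ t in Ioo (0:ℝ) 1,
          ‖fderiv ℝ V ((1 - t) • x + t • y)‖ₑ) ^ q := by
        refine setLIntegral_mono' hm fun x hx => ?_
        rw [← ENNReal.mul_rpow_of_nonneg _ _ hq0.le]
        gcongr
        exact hpt x hx
    _ = F ^ q * ∫⁻ x in Ω, (∫⁻ y in Ω, ∫⁻ t in Ioo (0:ℝ) 1,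
          ‖fderiv ℝ V ((1 - t) • x + t • y)‖ₑ) ^ q :=
        lintegral_const_mul' _ _ (ENNReal.rpow_ne_top_of_nonneg hq0.le hFt)
    _ ≤ _ := by
        rw [mul_assoc]
        gcongr
        exact hCb _ hgm

theorem abs_rpow_mul_self (q : ℝ) (hq : 1 < q) (a : ℝ) : |(|a| ^ (q - 2) * a)| = |a| ^ (q - 1) := by
  rcases eq_or_ne a 0 with rfl | ha
  · simp [Real.zero_rpow (show q - 1 ≠ 0 by linarith)]
  · have : 0 < |a| := abs_pos.2 ha
    rw [abs_mul, abs_of_nonneg (Real.rpow_nonneg this.le _)]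
    conv_lhs => rw [← Real.rpow_one |a|, ← Real.rpow_mul this.le, one_mul, ← Real.rpow_add this]
    congr 1; ring

theorem rpow_mul_self_sq (q : ℝ) (hq : 1 < q) (a : ℝ) : |a| ^ (q - 2) * a * a = |a| ^ q := by
  rcases eq_or_ne a 0 with rfl | ha
  · simp [Real.zero_rpow (show q ≠ 0 by linarith)]
  · have : 0 < |a| := abs_pos.2 ha
    rw [mul_assoc, ← abs_mul_abs_self, ← pow_two, ← Real.rpow_natCast, ← Real.rpow_add this]
    congr 1; push_cast; ring

theorem constraint_bound {α : Type*} [MeasurableSpace α] (μ : Measure α) [IsFiniteMeasure μ]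
    (q : ℝ) (hq : 1 < q) (V : α → ℝ) (hV : Measurable V) (M : ℝ) (hM : ∀ᵐ x ∂μ, |V x| ≤ M)
    (h0 : ∫ x, |V x| ^ (q - 2) * V x ∂μ = 0) (c : ℝ) :
    ∫⁻ x, ‖V x‖ₑ ^ q ∂μ ≤ ∫⁻ x, ‖V x - c‖ₑ ^ q ∂μ := by
  have hq0 : 0 < q := by linarith
  have hq1 : 0 < q - 1 := by linarith
  set X := ∫⁻ x, ‖V x‖ₑ ^ q ∂μ with hX
  have hen : ∀ a r : ℝ, 0 < r → ‖a‖ₑ ^ r = ‖|a| ^ r‖ₑ := by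
    intro a r hr
    rw [Real.enorm_of_nonneg (Real.rpow_nonneg (abs_nonneg a) r), ← ENNReal.ofReal_rpow_of_nonneg (abs_nonneg _) hr.le,
      ← Real.norm_eq_abs, ofReal_norm]
  have hi1 : Integrable (fun x => |V x| ^ (q - 2) * V x) μ := by
    refine Integrable.of_bound (C := M ^ (q - 1)) (by fun_prop) ?_
    filter_upwards [hM] with x hx
    rw [Real.norm_eq_abs, abs_rpow_mul_self q hq]
    gcongr
  have hi2 : Integrable (fun x => |V x| ^ q) μ := by
    refine Integrable.of_bound (C := M ^ q) (hV.abs.pow_const q).aestronglyMeasurable ?_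
    filter_upwards [hM] with x hx
    rw [Real.norm_eq_abs, abs_of_nonneg (by positivity)]
    gcongr
  have hXr : X = ‖∫ x, |V x| ^ q ∂μ‖ₑ := by
    rw [Real.enorm_of_nonneg (integral_nonneg fun x => by positivity),
      ofReal_integral_eq_lintegral_ofReal hi2 (Filter.Eventually.of_forall fun x => by positivity)]
    refine lintegral_congr fun x => ?_
    rw [hen _ _ hq0, Real.enorm_of_nonneg (by positivity)]
  have hXt : X ≠ ⊤ := by rw [hXr]; simp
  have e1 : ∫ x, |V x| ^ q ∂μ = ∫ x, |V x| ^ (q - 2) * V x * (V x - c) ∂μ := by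
    have : ∀ x, |V x| ^ (q - 2) * V x * (V x - c) =
        |V x| ^ q - (|V x| ^ (q - 2) * V x) * c := by
      intro x; rw [mul_sub, rpow_mul_self_sq q hq]
    simp_rw [this]
    rw [integral_sub hi2 (hi1.mul_const c), integral_mul_const, h0]
    simp
  have h1 : X ≤ ∫⁻ x, ‖V x‖ₑ ^ (q - 1) * ‖V x - c‖ₑ ∂μ := by
    rw [hXr, e1]
    refine (enorm_integral_le_lintegral_enorm _).trans (le_of_eq ?_)
    refine lintegral_congr fun x => ?_
    rw [enorm_mul, hen _ _ hq1, ← abs_rpow_mul_self q hq, Real.enorm_abs]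
  have h2 := (ENNReal.rpow_le_rpow h1 hq0.le).trans
    (holder_pow μ q hq _ _ (by fun_prop) (by fun_prop))
  have e2 : ∫⁻ a, (‖V a‖ₑ ^ (q - 1)) ^ (q / (q - 1)) ∂μ = X := by
    refine lintegral_congr fun x => ?_
    rw [← ENNReal.rpow_mul]; congr 1; field_simp
  rw [e2] at h2
  rcases eq_or_ne X 0 with hX0 | hX0
  · rw [hX0]; exact zero_le
  have e3 : X ^ q = X ^ (q - 1) * X := by
    conv_rhs => rw [← ENNReal.rpow_one X, ← ENNReal.rpow_mul, one_mul, ← ENNReal.rpow_add _ _ hX0 hXt]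
    congr 1; ring
  rw [e3] at h2
  exact (ENNReal.mul_le_mul_iff_right (by simp [hX0, hXt]) 
    (ENNReal.rpow_ne_top_of_nonneg hq1.le hXt)).1 h2

theorem rayleigh_nonneg {N : ℕ} (p q : ℝ) (Ω : Set (EuclideanSpace ℝ (Fin N)))
    (v : EuclideanSpace ℝ (Fin N) → ℝ) : 0 ≤ rayleighQuot p q Ω v := by
  unfold rayleighQuot
  have h1 : 0 ≤ ∫ x in Ω, ‖fderiv ℝ v x‖ ^ p := integral_nonneg fun x => by positivity
  have h2 : 0 ≤ ∫ x in Ω, |v x| ^ q := integral_nonneg fun x => by positivity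
  positivity

theorem muPQ_nonneg {N : ℕ} (p q : ℝ) (Ω : Set (EuclideanSpace ℝ (Fin N))) :
    0 ≤ muPQ p q Ω := by
  apply Real.sInf_nonneg
  rintro R ⟨v, K, -, -, -, rfl⟩
  exact rayleigh_nonneg p q Ω v

theorem muPQ_le {N : ℕ} (p q : ℝ) (Ω : Set (EuclideanSpace ℝ (Fin N)))
    (v : EuclideanSpace ℝ (Fin N) → ℝ) (K : NNReal)
    (h1 : LipschitzOnWith K v (closure Ω)) (h2 : ∃ x ∈ Ω, v x ≠ 0)
    (h3 : (∫ x in Ω, |v x| ^ (q - 2) * v x) = 0) : muPQ p q Ω ≤ rayleighQuot p q Ω v := by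
  refine csInf_le ⟨0, ?_⟩ ⟨v, K, h1, h2, h3, rfl⟩
  rintro R ⟨v, K, -, -, -, rfl⟩
  exact rayleigh_nonneg p q Ω v

theorem enorm_rpow_ofReal {F : Type*} [NormedAddCommGroup F] (a : F) (r : ℝ) (hr : 0 ≤ r) :
    ‖a‖ₑ ^ r = ENNReal.ofReal (‖a‖ ^ r) := by
  rw [← ENNReal.ofReal_rpow_of_nonneg (norm_nonneg _) hr, ofReal_norm]

theorem rayleigh_lower {N : ℕ} (p q : ℝ) (hp : 1 < p) (hpq : p < q)
    (hNq : N * (q / p - 1) < q)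
    (Ω : Set (EuclideanSpace ℝ (Fin N))) (hO : IsOpen Ω) (hC : Convex ℝ Ω)
    (hbd : Bornology.IsBounded Ω) (hne : Ω.Nonempty) :
    ∃ κ : ℝ, 0 < κ ∧ ∀ (v : EuclideanSpace ℝ (Fin N) → ℝ) (K : NNReal),
      LipschitzOnWith K v (closure Ω) → (∃ x ∈ Ω, v x ≠ 0) →
      (∫ x in Ω, |v x| ^ (q - 2) * v x) = 0 → κ ≤ rayleighQuot p q Ω v := by
  have hm := hO.measurableSet
  have hp0 : 0 < p := by linarith
  have hq0 : 0 < q := by linarith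
  obtain ⟨C, hCt, hCb⟩ := poincare_mean p q hp hpq hNq Ω hO hC hbd hne
  refine ⟨1 / (C.toReal ^ (p / q) + 1), by positivity, ?_⟩
  intro v K hv hv0 hcon
  obtain ⟨V, hV, hVv⟩ := hv.extend_real
  have : IsFiniteMeasure (volume.restrict Ω) := ⟨by simpa using hbd.measure_lt_top⟩
  have hvV : ∀ x ∈ Ω, v x = V x := fun x hx => hVv (subset_closure hx)
  have hfd : ∀ x ∈ Ω, fderiv ℝ v x = fderiv ℝ V x := by
    intro x hx
    apply Filter.EventuallyEq.fderiv_eq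
    filter_upwards [hO.mem_nhds hx] with y hy using hvV y hy
  have hray : rayleighQuot p q Ω v =
      (∫ x in Ω, ‖fderiv ℝ V x‖ ^ p) / (∫ x in Ω, |V x| ^ q) ^ (p / q) := by
    unfold rayleighQuot
    congr 1
    · exact setIntegral_congr_fun hm fun x hx => by simp only [hfd x hx]
    · congr 1
      exact setIntegral_congr_fun hm fun x hx => by simp only [hvV x hx]
  have hcon' : (∫ x in Ω, |V x| ^ (q - 2) * V x) = 0 := by
    rw [← hcon]
    exact setIntegral_congr_fun hm fun x hx => by simp only [hvV x hx]
  obtain ⟨M, hM⟩ := hbd.isCompact_closure.exists_bound_of_continuousOn hV.continuous.continuousOn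
  have hMae : ∀ᵐ x ∂(volume.restrict Ω), |V x| ≤ M := by
    filter_upwards [ae_restrict_mem hm] with x hx using hM x (subset_closure hx)
  obtain ⟨c, hc⟩ := hCb V K hV
  have hX := (constraint_bound _ q (by linarith) V hV.continuous.measurable M hMae hcon' c).trans hc
  have hgi : IntegrableOn (fun x => ‖fderiv ℝ V x‖ ^ p) Ω := by
    refine Integrable.of_bound (C := (K:ℝ) ^ p)
      ((measurable_fderiv ℝ V).norm.pow_const p).aestronglyMeasurable ?_
    refine Filter.Eventually.of_forall fun x => ?_
    rw [Real.norm_eq_abs, abs_of_nonneg (by positivity)]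
    gcongr
    exact norm_fderiv_le_of_lipschitz ℝ hV
  have hVi : IntegrableOn (fun x => |V x| ^ q) Ω := by
    have : IntegrableOn (fun x => |V x| ^ q) (closure Ω) :=
      ((hV.continuous.abs).rpow_const (fun x => Or.inr hq0.le)).continuousOn.integrableOn_compact
        hbd.isCompact_closure
    exact this.mono_set subset_closure
  simp_rw [enorm_rpow_ofReal _ _ hp0.le, enorm_rpow_ofReal _ _ hq0.le] at hX
  simp only [Real.norm_eq_abs] at hX
  rw [← ofReal_integral_eq_lintegral_ofReal hgi (Filter.Eventually.of_forall fun x => by positivity),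
    ← ofReal_integral_eq_lintegral_ofReal hVi (Filter.Eventually.of_forall fun x => by
      simp only [Pi.zero_apply]; positivity)] at hX
  rw [hray]
  set S := ∫ x in Ω, ‖fderiv ℝ V x‖ ^ p with hS
  set I := ∫ x in Ω, |V x| ^ q with hI
  have hS0 : 0 ≤ S := integral_nonneg fun x => by positivity
  have hI0 : 0 < I := by
    obtain ⟨x, hx, hx0⟩ := hv0
    rw [hI, setIntegral_pos_iff_support_of_nonneg_ae
      (Filter.Eventually.of_forall fun x => by simp only [Pi.zero_apply]; positivity) hVi]
    have hop : IsOpen ((Function.support fun x => |V x| ^ q) ∩ Ω) := by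
      refine IsOpen.inter ?_ hO
      exact ((hV.continuous.abs).rpow_const (fun x => Or.inr hq0.le)).isOpen_support
    refine hop.measure_pos volume ⟨x, ?_, hx⟩
    rw [hvV x hx] at hx0
    rw [Function.mem_support]
    have := abs_pos.2 hx0
    positivity
  have hreal : I ≤ C.toReal * S ^ (q / p) := by
    rw [ENNReal.ofReal_rpow_of_nonneg hS0 (by positivity)] at hX
    have := ENNReal.toReal_mono (ENNReal.mul_ne_top hCt (by simp)) hX
    rwa [ENNReal.toReal_ofReal hI0.le, ENNReal.toReal_mul,
      ENNReal.toReal_ofReal (by positivity)] at this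
  have h3 : I ^ (p / q) ≤ C.toReal ^ (p / q) * S := by
    calc I ^ (p / q) ≤ (C.toReal * S ^ (q / p)) ^ (p / q) := by gcongr
      _ = _ := by
        rw [Real.mul_rpow (by positivity) (by positivity), ← Real.rpow_mul hS0]
        have : q / p * (p / q) = 1 := by field_simp
        rw [this, Real.rpow_one]
  rw [div_le_div_iff₀ (by positivity) (by positivity)]
  nlinarith

/-- The diagonal map `diag(1, δ, …, δ)`. -/
noncomputable def thinMap {N : ℕ} (i0 : Fin N) (δ : ℝ) :
    EuclideanSpace ℝ (Fin N) →L[ℝ] EuclideanSpace ℝ (Fin N) :=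
  LinearMap.toContinuousLinearMap
    (Matrix.toEuclideanLin (Matrix.diagonal (fun i => if i = i0 then (1:ℝ) else δ)))

theorem thinMap_apply {N : ℕ} (i0 : Fin N) (δ : ℝ) (x : EuclideanSpace ℝ (Fin N)) (i : Fin N) :
    thinMap i0 δ x i = (if i = i0 then (1:ℝ) else δ) * x i := by
  simp [thinMap, Matrix.toLpLin_apply, Matrix.mulVec_diagonal]

theorem thinMap_det {N : ℕ} (i0 : Fin N) (δ : ℝ) :
    (thinMap i0 δ).det = δ ^ (N - 1) := by
  have : (thinMap i0 δ).det = LinearMap.det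
    (Matrix.toEuclideanLin (Matrix.diagonal (fun i => if i = i0 then (1:ℝ) else δ))) := rfl
  rw [this, Matrix.toEuclideanLin_eq_toLin_orthonormal, LinearMap.det_toLin, Matrix.det_diagonal,
    Finset.prod_ite]
  simp [Finset.filter_ne', Finset.card_erase_of_mem]

theorem thinMap_norm_le {N : ℕ} (i0 : Fin N) (δ : ℝ) (h0 : 0 < δ) (h1 : δ ≤ 1)
    (x : EuclideanSpace ℝ (Fin N)) : ‖thinMap i0 δ x‖ ≤ ‖x‖ := by
  rw [EuclideanSpace.norm_eq, EuclideanSpace.norm_eq]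
  apply Real.sqrt_le_sqrt
  refine Finset.sum_le_sum fun i _ => ?_
  rw [thinMap_apply, norm_mul]
  gcongr
  refine mul_le_of_le_one_left (norm_nonneg _) ?_
  split_ifs
  · simp
  · rw [Real.norm_eq_abs, abs_of_pos h0]; exact h1

theorem thinMap_inv {N : ℕ} (i0 : Fin N) (δ : ℝ) (h0 : δ ≠ 0) (x : EuclideanSpace ℝ (Fin N)) :
    thinMap i0 δ (thinMap i0 δ⁻¹ x) = x := by
  ext i
  rw [thinMap_apply, thinMap_apply]
  split_ifs
  · simp
  · field_simp

theorem abs_coord_le {N : ℕ} (i0 : Fin N) (x : EuclideanSpace ℝ (Fin N)) : |x i0| ≤ ‖x‖ := by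
  simpa using PiLp.norm_apply_le x i0

theorem exists_thin {N : ℕ} (hN : 2 ≤ N) (p q : ℝ) (hp : 1 < p)
    (hpq : p < q) (c : ℝ) (hc : 0 < c) (ε : ℝ) (hε : 0 < ε) :
    ∃ Ω : Set (EuclideanSpace ℝ (Fin N)),
      IsOpen Ω ∧ Bornology.IsBounded Ω ∧ Convex ℝ Ω ∧ Ω.Nonempty ∧
      diam Ω = c ∧ ∃ (v : EuclideanSpace ℝ (Fin N) → ℝ) (K : NNReal),
        LipschitzOnWith K v (closure Ω) ∧ (∃ x ∈ Ω, v x ≠ 0) ∧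
        (∫ x in Ω, |v x| ^ (q - 2) * v x) = 0 ∧ rayleighQuot p q Ω v < ε := by
  have hp0 : 0 < p := by linarith
  have hq0 : 0 < q := by linarith
  let i0 : Fin N := ⟨0, by omega⟩
  set B : Set (EuclideanSpace ℝ (Fin N)) := ball 0 (c / 2) with hB
  have hBm : MeasurableSet B := measurableSet_ball
  have hBi : IntegrableOn (fun x : EuclideanSpace ℝ (Fin N) => |x i0| ^ q) B := by
    have hcont : Continuous (fun x : EuclideanSpace ℝ (Fin N) => |x i0| ^ q) :=
      (Continuous.abs (by fun_prop)).rpow_const (fun x => Or.inr hq0.le)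
    exact (hcont.continuousOn.integrableOn_compact
      (isCompact_closedBall (0 : EuclideanSpace ℝ (Fin N)) (c / 2))).mono_set ball_subset_closedBall
  set I := ∫ x in B, |x i0| ^ q with hI
  have hsingle : ∀ s : ℝ, |s| < c / 2 → EuclideanSpace.single i0 s ∈ B := by
    intro s hs
    rw [hB, mem_ball_zero_iff]
    simpa using hs
  have hI0 : 0 < I := by
    rw [hI, setIntegral_pos_iff_support_of_nonneg_ae
      (Filter.Eventually.of_forall fun x => by simp only [Pi.zero_apply]; positivity) hBi]
    have hcont : Continuous (fun x : EuclideanSpace ℝ (Fin N) => |x i0| ^ q) :=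
      (Continuous.abs (by fun_prop)).rpow_const (fun x => Or.inr hq0.le)
    have hop : IsOpen ((Function.support fun x : EuclideanSpace ℝ (Fin N) => |x i0| ^ q) ∩ B) :=
      hcont.isOpen_support.inter isOpen_ball
    refine hop.measure_pos volume ⟨EuclideanSpace.single i0 (c / 4), ?_, hsingle _ ?_⟩
    · rw [Function.mem_support]
      simp
      positivity
    · rw [abs_of_pos (by positivity)]; linarith
  set M := volume.real B / I ^ (p / q) with hM
  have hr0 : 0 < 1 - p / q := by rw [sub_pos, div_lt_one hq0]; exact hpq
  have hlim : Filter.Tendsto (fun δ : ℝ => δ ^ (1 - p / q) * M) (nhdsWithin 0 (Ioi 0)) (nhds 0) := by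
    have : ContinuousAt (fun δ : ℝ => δ ^ (1 - p / q) * M) 0 :=
      (Real.continuousAt_rpow_const _ _ (Or.inr hr0.le)).mul continuousAt_const
    have h := this.tendsto
    simp only [Real.zero_rpow hr0.ne', zero_mul] at h
    exact h.mono_left nhdsWithin_le_nhds
  obtain ⟨δ, hδε, hδ⟩ := ((hlim.eventually (gt_mem_nhds hε)).and
    (Ioo_mem_nhdsGT (show (0:ℝ) < 1 by norm_num))).exists
  have hδ0 : 0 < δ := hδ.1
  set T := thinMap i0 δ with hT
  have hinvl : Function.LeftInverse (thinMap i0 δ⁻¹) T := fun x => by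
    have := thinMap_inv i0 δ⁻¹ (inv_ne_zero hδ0.ne') x
    rwa [inv_inv] at this
  have hinvr : Function.RightInverse (thinMap i0 δ⁻¹) T := fun x => thinMap_inv i0 δ hδ0.ne' x
  have hT0 : ∀ x, T x i0 = x i0 := fun x => by rw [hT, thinMap_apply]; simp
  set Ω := T '' B with hΩ
  have hΩO : IsOpen Ω := by
    rw [hΩ, Set.image_eq_preimage_of_inverse hinvl hinvr]
    exact isOpen_ball.preimage (thinMap i0 δ⁻¹).continuous
  have hΩB : Ω ⊆ B := by
    rintro _ ⟨x, hx, rfl⟩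
    rw [hB, mem_ball_zero_iff] at hx ⊢
    exact (thinMap_norm_le i0 δ hδ0 hδ.2.le x).trans_lt hx
  have hΩb : Bornology.IsBounded Ω := isBounded_ball.subset hΩB
  have hΩs : ∀ s : ℝ, |s| < c / 2 → EuclideanSpace.single i0 s ∈ Ω := by
    intro s hs
    refine ⟨_, hsingle s hs, ?_⟩
    ext i
    rw [hT, thinMap_apply]
    by_cases h : i = i0 <;> simp [h]
  have hdiam : diam Ω = c := by
    apply le_antisymm
    · refine (diam_mono hΩB isBounded_ball).trans ((diam_ball (by positivity)).trans ?_)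
      linarith
    · refine le_of_forall_lt fun s hs => ?_
      set s' := max s 0 with hs'
      have hs'c : s' < c := max_lt hs hc
      have hs'0 : 0 ≤ s' := le_max_right _ _
      set r := (s' + c) / 2 with hr
      have h1 : |r / 2| < c / 2 := by rw [abs_of_nonneg (by positivity)]; linarith
      have h2 : |(-(r / 2))| < c / 2 := by rwa [abs_neg]
      have := dist_le_diam_of_mem hΩb (hΩs _ h1) (hΩs _ h2)
      rw [EuclideanSpace.dist_single_same, Real.dist_eq] at this
      have h3 : r / 2 - -(r / 2) = r := by ring
      rw [h3, abs_of_nonneg (by positivity)] at this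
      have : s ≤ s' := le_max_left _ _
      linarith
  refine ⟨Ω, hΩO, hΩb, ?_, ⟨_, hΩs 0 (by simpa using hc)⟩, hdiam, ?_⟩
  · exact (convex_ball 0 (c / 2)).linear_image T.toLinearMap
  have hcv : ∀ g : EuclideanSpace ℝ (Fin N) → ℝ,
      ∫ x in Ω, g x = δ ^ (N - 1) * ∫ x in B, g (T x) := by
    intro g
    have := integral_image_eq_integral_abs_det_fderiv_smul volume hBm (f := T) (f' := fun _ => T)
      (fun x _ => T.hasFDerivWithinAt) hinvl.injective.injOn g
    rw [hΩ, this, ← integral_const_mul]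
    simp only [hT, thinMap_det, smul_eq_mul]
    rw [abs_of_pos (by positivity)]
  have hlip : LipschitzWith 1 (fun x : EuclideanSpace ℝ (Fin N) => x i0) := by
    refine LipschitzWith.of_dist_le_mul fun x y => ?_
    have := abs_coord_le i0 (x - y)
    simpa [Real.dist_eq, dist_eq_norm] using this
  have hodd : (∫ x in Ω, |x i0| ^ (q - 2) * x i0) = 0 := by
    rw [hcv]
    simp only [hT0]
    have : ∫ x in B, |x i0| ^ (q - 2) * x i0 = - ∫ x in B, |x i0| ^ (q - 2) * x i0 := by
      conv_lhs => rw [← integral_indicator hBm, ← integral_neg_eq_self, ]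
      rw [← integral_neg, ← integral_indicator hBm]
      congr 1
      ext x
      simp [indicator, hB]
    have : ∫ x in B, |x i0| ^ (q - 2) * x i0 = 0 := by linarith
    rw [this, mul_zero]
  refine ⟨fun x => x i0, 1, hlip.lipschitzOnWith,
    ⟨_, hΩs (c / 4) (by rw [abs_of_pos (by positivity)]; linarith), by simp; positivity⟩, hodd, ?_⟩
  refine lt_of_le_of_lt ?_ hδε
  set D := δ ^ (N - 1) with hD
  have hD0 : 0 < D := by positivity
  have hDδ : D ≤ δ := pow_le_of_le_one hδ0.le hδ.2.le (by omega)
  have hden : ∫ x in Ω, |x i0| ^ q = D * I := by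
    rw [hcv]; simp only [hT0]; rw [hI]
  have : IsFiniteMeasure (volume.restrict Ω) := ⟨by simpa using hΩb.measure_lt_top⟩
  have hnum : ∫ x in Ω, ‖fderiv ℝ (fun x : EuclideanSpace ℝ (Fin N) => x i0) x‖ ^ p ≤
      D * volume.real B := by
    have e : ∫ x in Ω, (1:ℝ) = D * volume.real B := by rw [hcv]; simp
    rw [← e]
    refine integral_mono_of_nonneg (Filter.Eventually.of_forall fun x => by
      simp only [Pi.zero_apply]; positivity) (integrable_const _)
      (Filter.Eventually.of_forall fun x => ?_)
    refine Real.rpow_le_one (norm_nonneg _) ?_ hp0.le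
    exact norm_fderiv_le_of_lipschitz ℝ hlip
  unfold rayleighQuot
  rw [hden]
  calc _ ≤ (D * volume.real B) / (D * I) ^ (p / q) := by gcongr
    _ = D ^ (1 - p / q) * M := by
      rw [Real.mul_rpow hD0.le hI0.le, Real.rpow_sub hD0, Real.rpow_one, hM]
      field_simp
    _ ≤ δ ^ (1 - p / q) * M := by
      have : 0 ≤ M := by positivity
      gcongr

theorem crit_ineq {N : ℕ} (p q : ℝ) (hp : 1 < p) (hpq : p < q) (hq : ltCritical N p q) :
    N * (q / p - 1) < q := by
  have hp0 : 0 < p := by linarith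
  have key : N * q - N * p < p * q := by
    rcases lt_or_ge p N with h | h
    · have := hq h
      rw [lt_div_iff₀ (by linarith)] at this
      linarith
    · have hN : (0:ℝ) ≤ N := Nat.cast_nonneg N
      rcases hN.eq_or_lt with h0 | h0
      · rw [← h0]; nlinarith
      · nlinarith
  have : N * (q / p - 1) = (N * q - N * p) / p := by field_simp
  rw [this, div_lt_iff₀ hp0]
  linarith

/-- Remark 4.5. Let `1 < p < q < p*`. For every `c > 0`, the infimum
of `μ_{p,q}(Ω)` over open bounded convex sets `Ω ⊂ ℝ^N` with `diam Ω ≤ c` equals `0`: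
the quantity is always nonnegative, and for every `ε > 0` there is an open bounded
convex set `Ω` with `diam Ω = c` and `0 < μ_{p,q}(Ω) < ε`. -/
theorem inf_muPQ_diam_eq_zero {N : ℕ} (hN : 2 ≤ N) (p q : ℝ) (hp : 1 < p)
    (hpq : p < q) (hq : ltCritical N p q) (c : ℝ) (hc : 0 < c) :
    (∀ Ω : Set (EuclideanSpace ℝ (Fin N)), IsOpen Ω → Bornology.IsBounded Ω →
      Convex ℝ Ω → Ω.Nonempty → diam Ω ≤ c → 0 ≤ muPQ p q Ω) ∧
    ∀ ε : ℝ, 0 < ε → ∃ Ω : Set (EuclideanSpace ℝ (Fin N)),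
      IsOpen Ω ∧ Bornology.IsBounded Ω ∧ Convex ℝ Ω ∧ Ω.Nonempty ∧
      diam Ω = c ∧ 0 < muPQ p q Ω ∧ muPQ p q Ω < ε := by
  refine ⟨fun Ω _ _ _ _ _ => muPQ_nonneg p q Ω, fun ε hε => ?_⟩
  obtain ⟨Ω, h1, h2, h3, h4, h5, v, K, hv1, hv2, hv3, hv4⟩ := exists_thin hN p q hp hpq c hc ε hε
  refine ⟨Ω, h1, h2, h3, h4, h5, ?_, (muPQ_le p q Ω v K hv1 hv2 hv3).trans_lt hv4⟩
  obtain ⟨κ, hκ, hlow⟩ := rayleigh_lower p q hp hpq (crit_ineq p q hp hpq hq) Ω h1 h3 h2 h4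
  refine hκ.trans_le (le_csInf ⟨_, v, K, hv1, hv2, hv3, rfl⟩ ?_)
  rintro R ⟨w, L, hw1, hw2, hw3, rfl⟩
  exact hlow w L hw1 hw2 hw3
end
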